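/- Let 0 < d < n be integers and let E ⊆ ℝ^n be a LARRF set of dimension d with constants ε and C₀, where ε is small enough depending only on n and d. Then there exist constants θ > 0 and M > 0, depending only on n, d and C₀, such that for every x ∈ E and 0 < r ≤ 1 there are a d-dimensional affine plane P and an M-Lipschitz map F : P → P^⊥ (P^⊥ the (n−d)-dimensional linear subspace orthogonal to P) such that H^d( E ∩ Γ_F ∩ B(x,r) ) ≥ θ r^d, where Γ_F = { z + F(z) : z ∈ P } is the graph of F over P. (Theorem 15.4: LARRF sets contain big pieces of Lipschitz graphs.) -/

import Mathlib

open Metric Set MeasureTheory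
open scoped ENNReal

noncomputable section

set_option synthInstance.maxHeartbeats 1000000
set_option maxHeartbeats 1000000

/-- `ℝⁿ`. -/
abbrev V (n : ℕ) := EuclideanSpace ℝ (Fin n)

/-- `P` is a `d`-dimensional affine plane of `ℝⁿ`. -/
def IsAffinePlane (n d : ℕ) (P : Set (V n)) : Prop :=
  ∃ Q : AffineSubspace ℝ (V n), (Q : Set (V n)) = P ∧
    Module.finrank ℝ Q.direction = d ∧ (Q : Set (V n)).Nonempty

/-- The normalized local Hausdorff distance `d_{x,r}(A,B)`. -/
def nhd {n : ℕ} (x : V n) (r : ℝ) (A B : Set (V n)) : ℝ :=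
  r⁻¹ * max (⨆ y ∈ A ∩ ball x r, infDist y B) (⨆ y ∈ B ∩ ball x r, infDist y A)

/-- `E` is a locally Ahlfors-regular Reifenberg-flat (LARRF) set of dimension `d`
with constants `ε` and `C₀` (Definition 15.1). -/
def IsLARRF (n d : ℕ) (ε C₀ : ℝ) (E : Set (V n)) : Prop :=
  E.Nonempty ∧ IsClosed E ∧
  ∀ x ∈ E, ∀ r : ℝ, 0 < r → r ≤ 1 →
    (∃ P : Set (V n), IsAffinePlane n d P ∧ x ∈ P ∧ nhd x r P E ≤ ε) ∧
    ENNReal.ofReal (C₀⁻¹ * r ^ d) ≤ μH[(d : ℝ)] (E ∩ ball x r) ∧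
    μH[(d : ℝ)] (E ∩ ball x r) ≤ ENNReal.ofReal (C₀ * r ^ d)

/-! ### No retraction -/

section NoRetraction

open Polynomial in
/-- Along a line, the determinant is a polynomial, so its value at time one is a fixed affine
combination of its values at finitely many arbitrarily small times. -/
lemma exists_det_one_add_eq_sum {E : Type*} [NormedAddCommGroup E] [NormedSpace ℝ E]
    [FiniteDimensional ℝ E] {δ : ℝ} (hδ : 0 < δ) :
    ∃ (m : ℕ) (t w : Fin m → ℝ), (∀ j, 0 < t j ∧ t j < δ) ∧ ∑ j, w j = 1 ∧
      ∀ A : E →L[ℝ] E, (1 + A).det = ∑ j, w j * (1 + t j • A).det := by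
  set N := Module.finrank ℝ E
  let t : Fin (N + 1) → ℝ := fun j => δ * ((j : ℝ) + 1) / (N + 2)
  have ht : Function.Injective t := by
    intro i j hij
    have h2 : (0 : ℝ) < N + 2 := by positivity
    simp only [t] at hij
    field_simp at hij
    have : (i : ℝ) = j := by linarith
    exact Fin.ext (by exact_mod_cast this)
  let w : Fin (N + 1) → ℝ := fun j => (Lagrange.basis Finset.univ t j).eval 1
  refine ⟨N + 1, t, w, fun j => ⟨by positivity, ?_⟩, ?_, fun A => ?_⟩
  · have h2 : (0 : ℝ) < N + 2 := by positivity
    simp only [t]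
    rw [div_lt_iff₀ h2]
    have : (j : ℝ) < N + 1 := by exact_mod_cast j.2
    nlinarith
  · have := congrArg (eval (1 : ℝ)) (Lagrange.sum_basis (s := Finset.univ) (v := t)
      ht.injOn Finset.univ_nonempty)
    simpa [eval_finsetSum, w] using this
  · let b := Module.finBasis ℝ E
    let M := LinearMap.toMatrix b b (A : E →ₗ[ℝ] E)
    let p : ℝ[X] := ((X : ℝ[X]) • M.map C + (1 : Matrix (Fin N) (Fin N) ℝ).map C).det
    have hp : ∀ s : ℝ, p.eval s = (1 + s • A).det := by
      intro s
      have h1 : (1 + s • A).det = (LinearMap.toMatrix b b ((1 + s • A : E →L[ℝ] E) :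
          E →ₗ[ℝ] E)).det := by
        rw [LinearMap.det_toMatrix]
      rw [h1]
      have h2 : LinearMap.toMatrix b b ((1 + s • A : E →L[ℝ] E) : E →ₗ[ℝ] E) = 1 + s • M := by
        have : ((1 + s • A : E →L[ℝ] E) : E →ₗ[ℝ] E) = LinearMap.id + s • (A : E →ₗ[ℝ] E) := rfl
        rw [this, map_add, map_smul, LinearMap.toMatrix_id]
      rw [h2, ← coe_evalRingHom, RingHom.map_det]
      congr 1
      ext i j
      by_cases hij : i = j <;> simp [hij] <;> ring
    have hdeg : p.degree < (Finset.univ : Finset (Fin (N + 1))).card := by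
      refine lt_of_le_of_lt degree_le_natDegree ?_
      have := natDegree_det_X_add_C_le M (1 : Matrix (Fin N) (Fin N) ℝ)
      simp only [Fintype.card_fin] at this
      simp only [Finset.card_univ, Fintype.card_fin]
      exact_mod_cast Nat.lt_succ_of_le this
    have h3 := congrArg (eval (1 : ℝ)) (Lagrange.eq_interpolate (s := Finset.univ) (v := t)
      ht.injOn hdeg)
    rw [Lagrange.interpolate_apply, eval_finsetSum, hp] at h3
    simp only [one_smul] at h3
    rw [h3]
    refine Finset.sum_congr rfl fun j _ => ?_
    rw [eval_mul, eval_C, hp, mul_comm]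

variable {E : Type*} [NormedAddCommGroup E] [InnerProductSpace ℝ E] [FiniteDimensional ℝ E]

/-- A `C¹` map into a sphere has degenerate derivative. -/
lemma det_eq_zero_of_norm_const {k : E → E} {A : E →L[ℝ] E} {x : E} {R : ℝ} (hR : 0 < R)
    (hA : HasFDerivAt k A x) (hk : ∀ y, ‖k y‖ = R) : A.det = 0 := by
  have h1 : HasFDerivAt (fun y => inner ℝ (k y) (k y)) (0 : E →L[ℝ] ℝ) x := by
    simp only [real_inner_self_eq_norm_sq, hk]
    exact hasFDerivAt_const _ _
  have h2 := (hA.inner ℝ hA).unique h1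
  have h3 : ∀ v, inner ℝ (k x) (A v) = 0 := by
    intro v
    have := DFunLike.congr_fun h2 v
    simp [real_inner_comm] at this
    exact this
  by_contra hne
  have hu : IsUnit ((A : E →ₗ[ℝ] E)) := by
    rw [LinearMap.isUnit_iff_isUnit_det]
    exact isUnit_iff_ne_zero.mpr hne
  have hs : Function.Surjective A := ((Module.End.isUnit_iff _).mp hu).2
  obtain ⟨v, hv⟩ := hs (k x)
  have := h3 v
  rw [hv, real_inner_self_eq_norm_sq, hk] at this
  nlinarith

variable [Nontrivial E]

/-- A smooth self-map that is the identity outside a ball takes the value zero. -/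
lemma ContDiff.exists_eq_zero_of_eq_id_off_ball {h : E → E} {R : ℝ} (hR : 0 < R)
    (hh : ContDiff ℝ 1 h) (hid : ∀ x, R ≤ ‖x‖ → h x = x) : ∃ x, h x = 0 := by
  by_contra! h0
  let : MeasurableSpace E := borel E
  have : BorelSpace E := ⟨rfl⟩
  let μ : Measure E := Measure.addHaar
  let k : E → E := fun x => (R / ‖h x‖) • h x
  have hk : ContDiff ℝ 1 k :=
    (contDiff_const.div (hh.norm ℝ h0) fun x => norm_ne_zero_iff.2 (h0 x)).smul hh
  have hkR : ∀ x, ‖k x‖ = R := fun x => by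
    have := norm_ne_zero_iff.2 (h0 x)
    simp only [k, norm_smul, norm_div, norm_norm, Real.norm_of_nonneg hR.le]
    field_simp
  let χ : ContDiffBump (0 : E) := ⟨R, 2 * R, hR, by linarith⟩
  let g : E → E := fun x => χ x • (k x - x)
  have hg : ContDiff ℝ 1 g := χ.contDiff.smul (hk.sub contDiff_id)
  have hgc : HasCompactSupport g := χ.hasCompactSupport.smul_right
  obtain ⟨L, hL⟩ := hg.lipschitzWith_of_hasCompactSupport hgc one_ne_zero
  have hχ1 : ∀ x ∈ closedBall (0 : E) R, χ x = 1 := fun x hx => χ.one_of_mem_closedBall hx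
  have hgball : ∀ x ∈ closedBall (0 : E) R, g x = k x - x := fun x hx => by
    simp [g, hχ1 x hx]
  -- derivative on the ball
  have hfd : ∀ x ∈ ball (0 : E) R, HasFDerivAt k (1 + fderiv ℝ g x) x := by
    intro x hx
    have h1 : HasFDerivAt g (fderiv ℝ g x) x := (hg.differentiable one_ne_zero x).hasFDerivAt
    have h2 : HasFDerivAt (fun y => y + g y) (1 + fderiv ℝ g x) x := (hasFDerivAt_id x).add h1
    refine h2.congr_of_eventuallyEq ?_
    filter_upwards [isOpen_ball.mem_nhds hx] with y hy
    rw [hgball y (ball_subset_closedBall hy)]; abel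
  obtain ⟨δ, hδ, hdet⟩ : ∃ δ > 0, ∀ A : E →L[ℝ] E, ‖A‖ < δ → 0 < (1 + A).det := by
    have hc : Continuous fun A : E →L[ℝ] E => (1 + A).det :=
      ContinuousLinearMap.continuous_det.comp (continuous_const.add continuous_id)
    have : {A : E →L[ℝ] E | 0 < (1 + A).det} ∈ nhds (0 : E →L[ℝ] E) := by
      refine (isOpen_lt continuous_const hc).mem_nhds ?_
      simp [ContinuousLinearMap.det]
    obtain ⟨δ, hδ, h⟩ := Metric.mem_nhds_iff.1 this
    exact ⟨δ, hδ, fun A hA => h (by simpa using hA)⟩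
  -- small times
  have hvol : ∀ t : ℝ, 0 < t → t < min (1 / 2) (min δ (1 / 2) / (L + 1)) →
      ∫ x in ball (0 : E) R, (1 + t • fderiv ℝ g x).det ∂μ = μ.real (ball 0 R) := by
    intro t ht htl
    have ht1 : t < 1 / 2 := htl.trans_le (min_le_left _ _)
    have htL : t * (L + 1) < min δ (1 / 2) := by
      have := htl.trans_le (min_le_right _ _)
      rwa [lt_div_iff₀ (by positivity)] at this
    have htδ : t * L < δ := by
      have := htL.trans_le (min_le_left _ _); nlinarith
    have ht2 : t * L < 1 / 2 := by
      have := htL.trans_le (min_le_right _ _); nlinarith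
    let f : E → E := fun x => x + t • g x
    have happ : ApproximatesLinearOn f ((ContinuousLinearEquiv.refl ℝ E : E ≃L[ℝ] E) : E →L[ℝ] E)
        univ (1 / 2 : NNReal) := by
      intro x _ y _
      have := hL.dist_le_mul x y
      rw [dist_eq_norm, dist_eq_norm] at this
      have e : f x - f y - ((ContinuousLinearEquiv.refl ℝ E : E ≃L[ℝ] E) : E →L[ℝ] E) (x - y)
          = t • (g x - g y) := by
        simp [f, smul_sub]; abel
      rw [e, norm_smul, Real.norm_of_nonneg ht.le]
      have h0 := norm_nonneg (x - y)
      calc t * ‖g x - g y‖ ≤ t * (L * ‖x - y‖) := by gcongr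
        _ = (t * L) * ‖x - y‖ := by ring
        _ ≤ (1 / 2 : NNReal) * ‖x - y‖ := by
          have : ((1 / 2 : NNReal) : ℝ) = 1 / 2 := by norm_num
          rw [this]; gcongr
    have hN : Subsingleton E ∨ (1 / 2 : NNReal) <
        ‖((ContinuousLinearEquiv.refl ℝ E).symm : E →L[ℝ] E)‖₊⁻¹ := by
      right
      have : ‖((ContinuousLinearEquiv.refl ℝ E).symm : E →L[ℝ] E)‖₊ = 1 := by
        have : ((ContinuousLinearEquiv.refl ℝ E).symm : E →L[ℝ] E) =
            ContinuousLinearMap.id ℝ E := rfl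
        rw [this, ← NNReal.coe_inj]; simp
      rw [this]; norm_num
    have hinj := happ.injOn hN
    have hsurj := happ.surjective hN
    have hin : ∀ x ∈ ball (0 : E) R, f x ∈ ball (0 : E) R := by
      intro x hx
      have e : f x = (1 - t) • x + t • k x := by
        simp only [f, hgball x (ball_subset_closedBall hx), smul_sub, sub_smul, one_smul]; abel
      rw [mem_ball_zero_iff] at hx ⊢
      calc ‖f x‖ ≤ ‖(1 - t) • x‖ + ‖t • k x‖ := by rw [e]; exact norm_add_le _ _
        _ = (1 - t) * ‖x‖ + t * R := by
          rw [norm_smul, norm_smul, hkR, Real.norm_of_nonneg ht.le,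
            Real.norm_of_nonneg (by linarith)]
        _ < R := by nlinarith
    have hout : ∀ x ∉ ball (0 : E) R, f x ∉ ball (0 : E) R := by
      intro x hx
      rw [mem_ball_zero_iff, not_lt] at hx ⊢
      have hx0 : 0 < ‖x‖ := hR.trans_le hx
      have e : f x = (1 - t * χ x * (1 - R / ‖x‖)) • x := by
        simp only [f, g, k, hid x hx, smul_sub, sub_smul, one_smul, smul_smul, mul_sub, mul_one]
        rw [← mul_assoc]; abel
      have hχ0 := χ.nonneg' x
      have hχ := χ.le_one (x := x)
      have h3 : R / ‖x‖ ≤ 1 := (div_le_one hx0).2 hx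
      have h4 : 0 ≤ R / ‖x‖ := by positivity
      have h5 : t * χ x ≤ 1 := by nlinarith
      have h6 : 0 ≤ t * χ x := by positivity
      have h7 : R / ‖x‖ ≤ 1 - t * χ x * (1 - R / ‖x‖) := by nlinarith
      rw [e, norm_smul, Real.norm_of_nonneg (h4.trans h7)]
      calc R = R / ‖x‖ * ‖x‖ := by field_simp
        _ ≤ _ := by gcongr
    have himg : f '' ball (0 : E) R = ball 0 R := by
      refine Subset.antisymm (image_subset_iff.2 hin) fun y hy => ?_
      obtain ⟨x, rfl⟩ := hsurj y
      exact ⟨x, by_contra fun hx => hout x hx hy, rfl⟩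
    have hf' : ∀ x ∈ ball (0 : E) R, HasFDerivWithinAt f (1 + t • fderiv ℝ g x) (ball 0 R) x :=
      fun x _ => ((hasFDerivAt_id x).add
        ((hg.differentiable one_ne_zero x).hasFDerivAt.const_smul t)).hasFDerivWithinAt
    have key := integral_image_eq_integral_abs_det_fderiv_smul μ measurableSet_ball hf'
      (hinj.mono (subset_univ _)) (fun _ => (1 : ℝ))
    rw [himg] at key
    simp only [smul_eq_mul, mul_one, integral_const, MeasurableSet.univ, measureReal_restrict_apply,
      univ_inter] at key
    rw [key]
    refine integral_congr_ae (Filter.Eventually.of_forall fun x => ?_)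
    refine (abs_of_pos (hdet _ ?_)).symm
    calc ‖t • fderiv ℝ g x‖ = t * ‖fderiv ℝ g x‖ := by
          rw [norm_smul, Real.norm_of_nonneg ht.le]
      _ ≤ t * L := by gcongr; exact norm_fderiv_le_of_lipschitz ℝ hL
      _ < δ := htδ
  obtain ⟨m, t, w, ht, hw, hsum⟩ := exists_det_one_add_eq_sum (E := E)
    (δ := min (1 / 2) (min δ (1 / 2) / (L + 1))) (by positivity)
  have hInt : ∀ j,
      IntegrableOn (fun x => w j * (1 + t j • fderiv ℝ g x).det) (ball (0 : E) R) μ := by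
    intro j
    have hc : Continuous fun x => w j * (1 + t j • fderiv ℝ g x).det :=
      continuous_const.mul (ContinuousLinearMap.continuous_det.comp
        (continuous_const.add ((hg.continuous_fderiv one_ne_zero).const_smul (t j))))
    exact (hc.continuousOn.integrableOn_compact (isCompact_closedBall 0 R)).mono_set
      ball_subset_closedBall
  have h1 : ∫ x in ball (0 : E) R, (1 + fderiv ℝ g x).det ∂μ = μ.real (ball 0 R) := by
    rw [show (fun x => (1 + fderiv ℝ g x).det) = fun x => ∑ j, w j * (1 + t j • fderiv ℝ g x).det
      from funext fun x => hsum _]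
    rw [integral_finsetSum _ fun j _ => hInt j]
    simp only [integral_const_mul]
    rw [Finset.sum_congr rfl fun j _ => by rw [hvol (t j) (ht j).1 (ht j).2], ← Finset.sum_mul, hw,
      one_mul]
  have h2 : ∫ x in ball (0 : E) R, (1 + fderiv ℝ g x).det ∂μ = 0 := by
    rw [setIntegral_congr_fun measurableSet_ball (g := fun _ => (0 : ℝ))
      fun x hx => det_eq_zero_of_norm_const hR (hfd x hx) hkR]
    simp
  have h3 : 0 < μ.real (ball (0 : E) R) :=
    ENNReal.toReal_pos (measure_ball_pos μ 0 hR).ne' measure_ball_lt_top.ne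
  linarith

open scoped Manifold ContDiff in
/-- A continuous self-map that is the identity outside a ball takes the value zero. -/
theorem Continuous.exists_eq_zero_of_eq_id_off_ball {h : E → E} {R : ℝ} (hR : 0 < R)
    (hh : Continuous h) (hid : ∀ x, R ≤ ‖x‖ → h x = x) : ∃ x, h x = 0 := by
  by_contra! h0
  obtain ⟨δ, hδ, hδh⟩ : ∃ δ > 0, ∀ x ∈ closedBall (0 : E) (2 * R), δ ≤ ‖h x‖ := by
    obtain ⟨z, _, hz⟩ := (isCompact_closedBall (0 : E) (2 * R)).exists_isMinOn
      ⟨0, by simp [hR.le]⟩ hh.norm.continuousOn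
    exact ⟨‖h z‖, norm_pos_iff.2 (h0 z), fun x hx => hz hx⟩
  let t : E → Set E := fun x => if 2 * R ≤ ‖x‖ then {x} else ball (h x) δ
  obtain ⟨g, hg⟩ := exists_contMDiffMap_forall_mem_convex_of_local (n := 1) 𝓘(ℝ, E) (t := t)
    (fun x => by
      by_cases hx : 2 * R ≤ ‖x‖
      · simp only [t, hx, if_true]; exact convex_singleton x
      · simp only [t, hx, if_false]; exact convex_ball _ _)
    (fun x => by
      by_cases hx : R < ‖x‖
      · refine ⟨{y | R < ‖y‖}, (isOpen_lt continuous_const continuous_norm).mem_nhds hx, id,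
          contMDiffOn_id, fun y hy => ?_⟩
        by_cases hy2 : 2 * R ≤ ‖y‖
        · simp [t, hy2]
        · simp only [t, hy2, if_false, hid y (le_of_lt hy), id]; exact mem_ball_self hδ
      · have h1 : {y | ‖y‖ < 2 * R} ∈ nhds x :=
          (isOpen_lt continuous_norm continuous_const).mem_nhds
            (show ‖x‖ < 2 * R by linarith [not_lt.1 hx])
        have h2 : {y | h x ∈ ball (h y) δ} ∈ nhds x := by
          have : {y | h x ∈ ball (h y) δ} = {y | dist (h x) (h y) < δ} := rfl
          rw [this]
          exact (isOpen_lt (continuous_const.dist hh) continuous_const).mem_nhds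
            (by simpa using hδ)
        refine ⟨_, Filter.inter_mem h1 h2, fun _ => h x, contMDiffOn_const, fun y hy => ?_⟩
        have hy1 : ‖y‖ < 2 * R := hy.1
        simp only [t, not_le.2 hy1, if_false]
        exact hy.2)
  obtain ⟨x, hx⟩ := ContDiff.exists_eq_zero_of_eq_id_off_ball (h := g) (R := 2 * R) (by positivity)
    g.contMDiff.contDiff (fun x hx => by
      have := hg x
      simpa only [t, hx, if_true, mem_singleton_iff] using this)
  have := hg x
  by_cases hx2 : 2 * R ≤ ‖x‖
  · simp only [t, hx2, if_true, hx, mem_singleton_iff] at this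
    rw [← this, norm_zero] at hx2
    linarith
  · simp only [t, hx2, if_false, hx, mem_ball, dist_zero_left] at this
    exact absurd (hδh x (by simpa using (not_le.1 hx2).le)) (not_le.2 this)

end NoRetraction

/-! ### Essential sets -/

section Essential

variable {X : Type*} [MetricSpace X] {P : Type*} [NormedAddCommGroup P]

/-- A ball minus one of its points retracts onto the complement of the ball. -/
lemma exists_retraction_compl_ball [NormedSpace ℝ P] {b c : P} {ρ : ℝ} (hb : b ∈ ball c ρ) :
    ∃ R : P → P, ContinuousOn R {b}ᶜ ∧ (∀ y ≠ b, R y ∉ ball c ρ) ∧ ∀ y ∉ ball c ρ, R y = y := by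
  set U : Set P := ball (c - b) ρ
  have hUb : ∀ y, y - b ∈ U ↔ y ∈ ball c ρ := fun y => by simp [U, dist_eq_norm]
  have hUo : IsOpen U := isOpen_ball
  have hUc : Convex ℝ U := convex_ball _ _
  have hU0 : (0 : P) ∈ U := by simpa using (hUb b).2 hb
  have hUn : U ∈ nhds (0 : P) := hUo.mem_nhds hU0
  have hUa : Absorbent ℝ U := absorbent_nhds_zero hUn
  have hgc : Continuous (gauge U) := continuous_gauge hUc hUn
  have hpos : ∀ v ≠ (0 : P), 0 < gauge U v := fun v hv =>
    (gauge_pos hUa (NormedSpace.isVonNBounded_iff ℝ |>.2 isBounded_ball)).2 hv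
  have hlt : ∀ v, gauge U v < 1 ↔ v ∈ U := fun v => by
    conv_rhs => rw [← setOfPred_gauge_lt_one_eq_self_of_isOpen hUc hU0 hUo]
    rfl
  refine ⟨fun y => b + max 1 (gauge U (y - b))⁻¹ • (y - b), ?_, fun y hy => ?_, fun y hy => ?_⟩
  · have h1 : ContinuousOn (fun y => (gauge U (y - b))⁻¹) {b}ᶜ :=
      (hgc.comp (continuous_id.sub continuous_const)).continuousOn.inv₀
        fun y hy => (hpos _ (sub_ne_zero.2 hy)).ne'
    exact continuousOn_const.add ((continuousOn_const.sup h1).smul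
      (continuousOn_id.sub continuousOn_const))
  · have hp := hpos _ (sub_ne_zero.2 hy)
    rw [← hUb, ← hlt, add_sub_cancel_left, gauge_smul_of_nonneg (by positivity), smul_eq_mul,
      not_lt]
    calc (1 : ℝ) = (gauge U (y - b))⁻¹ * gauge U (y - b) := by field_simp
      _ ≤ _ := by gcongr; exact le_max_right _ _
  · rw [← hUb, ← hlt, not_lt] at hy
    have : max 1 (gauge U (y - b))⁻¹ = 1 := max_eq_left (inv_le_one_of_one_le₀ hy)
    simp [this]

/-- `K` is inessential over the ball `B(c, ρ)` if `π` can be modified on `K`, over that ball only,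
so that its image avoids the ball. -/
def Inessential (π : X → P) (K : Set X) (c : P) (ρ : ℝ) : Prop :=
  ∃ g : X → P, ContinuousOn g K ∧ (∀ y ∈ K, g y ∉ ball c ρ) ∧ ∀ y ∈ K, π y ∉ ball c ρ → g y = π y

variable {π : X → P} {K S : Set X} {c c' : P} {ρ ρ' t t' : ℝ}

lemma Inessential.of_avoid [NormedSpace ℝ P] {g : X → P} {b : P} (hb : b ∈ ball c ρ)
    (hg : ContinuousOn g K)
    (hgb : ∀ y ∈ K, g y ≠ b) (hgπ : ∀ y ∈ K, π y ∉ ball c ρ → g y = π y) :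
    Inessential π K c ρ := by
  obtain ⟨R, hRc, hRb, hRi⟩ := exists_retraction_compl_ball hb
  refine ⟨R ∘ g, hRc.comp hg fun y hy => hgb y hy, fun y hy => hRb _ (hgb y hy), fun y hy hπ => ?_⟩
  rw [Function.comp_apply, hgπ y hy hπ, hRi _ hπ]

lemma Inessential.mono_ball [NormedSpace ℝ P] (hρ' : 0 < ρ') (hb : ball c' ρ' ⊆ ball c ρ)
    (h : Inessential π K c' ρ') : Inessential π K c ρ := by
  obtain ⟨g, hg, hg1, hg2⟩ := h
  exact .of_avoid (hb (mem_ball_self hρ')) hg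
    (fun y hy h => hg1 y hy (h ▸ mem_ball_self hρ')) fun y hy h => hg2 y hy fun h' => h (hb h')

lemma ball_subset_image_of_not_inessential [NormedSpace ℝ P] (hπ : Continuous π)
    (h : ¬ Inessential π K c ρ) :
    ball c ρ ⊆ π '' K := by
  intro b hb
  by_contra hbK
  exact h (.of_avoid hb hπ.continuousOn (fun y hy e => hbK ⟨y, hy, e⟩) fun _ _ _ => rfl)

/-- The points of `A` reachable from `y` by chains in `A` with steps shorter than `t`. -/
def chainComponent (A : Set X) (t : ℝ) (y : X) : Set X :=
  {z | Relation.ReflTransGen (fun u v => u ∈ A ∧ v ∈ A ∧ dist u v < t) y z}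

section Chain

variable {A A' : Set X} {y z u v : X}

lemma mem_chainComponent_self : y ∈ chainComponent A t y := Relation.ReflTransGen.refl

lemma chainComponent_subset (hy : y ∈ A) : chainComponent A t y ⊆ A := by
  intro z hz
  rcases Relation.ReflTransGen.cases_tail hz with h | ⟨_, _, h⟩
  · exact h ▸ hy
  · exact h.2.1

lemma chainComponent_eq (h : z ∈ chainComponent A t y) :
    chainComponent A t z = chainComponent A t y := by
  have hs : Std.Symm (fun u v => u ∈ A ∧ v ∈ A ∧ dist u v < t) :=
    ⟨fun u v h => ⟨h.2.1, h.1, by rw [dist_comm]; exact h.2.2⟩⟩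
  ext w
  exact ⟨fun hw => Relation.ReflTransGen.trans h hw,
    fun hw => Relation.ReflTransGen.trans (Std.Symm.symm _ _ h) hw⟩

lemma chainComponent_mono (hA : A' ⊆ A) (ht : t' ≤ t) :
    chainComponent A' t' y ⊆ chainComponent A t y :=
  fun _ hz => Relation.ReflTransGen.mono
    (fun _ _ h => ⟨hA h.1, hA h.2.1, h.2.2.trans_le ht⟩) _ _ hz

lemma mem_chainComponent_of_dist_lt (hu : u ∈ chainComponent A t y) (huA : u ∈ A) (hv : v ∈ A)
    (huv : dist u v < t) : v ∈ chainComponent A t y :=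
  Relation.ReflTransGen.tail hu ⟨huA, hv, huv⟩

lemma chainComponent_subset_of_mem (hA : A' ⊆ A) (ht : t' ≤ t) (h : z ∈ chainComponent A t y) :
    chainComponent A' t' z ⊆ chainComponent A t y :=
  (chainComponent_mono hA ht).trans (chainComponent_eq h).subset

lemma isClosed_chainComponent (hA : IsClosed A) (ht : 0 < t) (hy : y ∈ A) :
    IsClosed (chainComponent A t y) := by
  refine isClosed_of_closure_subset fun z hz => ?_
  have hzA : z ∈ A := hA.closure_subset_iff.2 (chainComponent_subset hy) hz
  obtain ⟨u, hu, hd⟩ := Metric.mem_closure_iff.1 hz t ht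
  exact mem_chainComponent_of_dist_lt hu (chainComponent_subset hy hu) hzA (by rwa [dist_comm])

lemma exists_mem_chainComponent_dist {s : ℝ} (ht : 0 < t) (hs : 0 ≤ s) (hy : y ∈ A)
    (hu : u ∈ chainComponent A t y) (hsu : s ≤ dist y u) :
    ∃ a ∈ A, s ≤ dist y a ∧ dist y a < s + t := by
  induction hu with
  | refl => exact ⟨y, hy, hsu, by rw [dist_self]; linarith⟩
  | @tail u v _ huv ih =>
    by_cases h : s ≤ dist y u
    · exact ih h
    · exact ⟨v, huv.2.1, hsu, by linarith [dist_triangle y u v, huv.2.2]⟩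

/-- A chain component that stays in a region of small measure is short. -/
lemma dist_lt_of_mem_chainComponent [MeasurableSpace X] [BorelSpace X] {μ : Measure X} {T : Set X}
    (hT : MeasurableSet T) {κ : ℝ≥0∞} {N : ℕ} (ht : 0 < t) (hy : y ∈ A)
    (hκ : ∀ a ∈ A, κ ≤ μ (T ∩ ball a (t / 2))) (hN : μ T < (N + 1) * κ)
    (hu : u ∈ chainComponent A t y) : dist y u < 2 * t * N := by
  by_contra! hd
  have hex : ∀ m : Fin (N + 1), ∃ a ∈ A, 2 * t * m ≤ dist y a ∧ dist y a < 2 * t * m + t := by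
    intro m
    refine exists_mem_chainComponent_dist ht (by positivity) hy hu (le_trans ?_ hd)
    have : (m : ℝ) ≤ N := by exact_mod_cast Nat.lt_succ_iff.1 m.2
    gcongr
  choose a haA ha1 ha2 using hex
  have hdist : ∀ m m' : Fin (N + 1), m < m' → t ≤ dist (a m) (a m') := by
    intro m m' h
    have h1 : (m : ℝ) + 1 ≤ m' := by exact_mod_cast h
    have := dist_triangle y (a m) (a m')
    nlinarith [ha2 m, ha1 m']
  have hdisj : Pairwise (Function.onFun Disjoint fun m => T ∩ ball (a m) (t / 2)) := by
    intro m m' h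
    refine Disjoint.mono inter_subset_right inter_subset_right (ball_disjoint_ball ?_)
    rcases lt_or_gt_of_ne h with h | h
    · linarith [hdist _ _ h]
    · rw [dist_comm]; linarith [hdist _ _ h]
  have : (N + 1) * κ ≤ μ T :=
    calc (N + 1) * κ = ∑ _m : Fin (N + 1), κ := by simp
      _ ≤ ∑ m, μ (T ∩ ball (a m) (t / 2)) := Finset.sum_le_sum fun m _ => hκ _ (haA m)
      _ = μ (⋃ m, T ∩ ball (a m) (t / 2)) := by
        rw [measure_iUnion hdisj fun m => hT.inter measurableSet_ball, tsum_fintype]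
      _ ≤ μ T := measure_mono (iUnion_subset fun m => inter_subset_left)
  exact absurd hN (not_lt.2 this)

end Chain

/-- The part of `S` lying over a closed ball. -/
def slab {X : Type*} (π : X → P) (S : Set X) (c : P) (ρ : ℝ) : Set X := S ∩ π ⁻¹' closedBall c ρ

/-- The chain component of `z` in the part of `S` lying over a closed ball. -/
def cluster (π : X → P) (S : Set X) (c : P) (ρ t : ℝ) (z : X) : Set X :=
  chainComponent (slab π S c ρ) t z

/-- The cluster of `z` cannot be pushed off the ball `B(c, ρ)`. -/
def IsEssential (π : X → P) (S : Set X) (c : P) (ρ t : ℝ) (z : X) : Prop :=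
  z ∈ slab π S c ρ ∧ ¬ Inessential π (cluster π S c ρ t z) c ρ

lemma slab_mono {X : Type*} {π : X → P} {S : Set X} (h : dist c' c + ρ' ≤ ρ) :
    slab π S c' ρ' ⊆ slab π S c ρ :=
  inter_subset_inter_right _ (preimage_mono (closedBall_subset_closedBall' (by linarith)))

lemma isClosed_slab (hπ : Continuous π) (hS : IsClosed S) : IsClosed (slab π S c ρ) :=
  hS.inter (isClosed_closedBall.preimage hπ)

lemma isClosed_cluster (hπ : Continuous π) (hS : IsClosed S) (ht : 0 < t) {z : X}
    (hz : z ∈ slab π S c ρ) : IsClosed (cluster π S c ρ t z) :=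
  isClosed_chainComponent (isClosed_slab hπ hS) ht hz

lemma cluster_subset_of_mem {y z : X} (h : dist c' c + ρ' ≤ ρ) (ht : t' ≤ t)
    (hz : z ∈ cluster π S c ρ t y) : cluster π S c' ρ' t' z ⊆ cluster π S c ρ t y :=
  chainComponent_subset_of_mem (slab_mono h) ht hz

lemma Inessential.of_forall_cluster (hπ : Continuous π) (hK : IsClosed K) (hKS : K ⊆ S)
    (ht : 0 < t)
    (h : ∀ z ∈ K, π z ∈ closedBall c ρ → Inessential π (cluster π S c ρ t z) c ρ) :
    Inessential π K c ρ := by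
  classical
  let γ : Set X → X → P := fun C => if hC : Inessential π C c ρ then hC.choose else π
  have hγ : ∀ C, Inessential π C c ρ → ContinuousOn (γ C) C ∧ (∀ y ∈ C, γ C y ∉ ball c ρ) ∧
      ∀ y ∈ C, π y ∉ ball c ρ → γ C y = π y := fun C hC => by
    simp only [γ, hC, dif_pos]; exact hC.choose_spec
  let g : X → P := fun y => if π y ∈ closedBall c ρ then γ (cluster π S c ρ t y) y else π y
  have hg2 : ∀ y ∈ K, π y ∉ ball c ρ → g y = π y := by
    intro y hy hyb
    by_cases hyc : π y ∈ closedBall c ρ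
    · simp only [g, hyc, if_true]
      exact (hγ _ (h y hy hyc)).2.2 y mem_chainComponent_self hyb
    · simp only [g, hyc, if_false]
  refine ⟨g, ?_, fun y hy => ?_, hg2⟩
  · have hK1 : IsClosed (K ∩ π ⁻¹' closedBall c ρ) := hK.inter (isClosed_closedBall.preimage hπ)
    have hK2 : IsClosed (K ∩ π ⁻¹' (ball c ρ)ᶜ) := hK.inter (isOpen_ball.isClosed_compl.preimage hπ)
    have hKu : K = (K ∩ π ⁻¹' closedBall c ρ) ∪ (K ∩ π ⁻¹' (ball c ρ)ᶜ) := by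
      ext y
      by_cases hy : π y ∈ ball c ρ
      · simp [hy, ball_subset_closedBall hy]
      · simp +contextual [hy]
    rw [hKu]
    refine ContinuousOn.union_of_isClosed ?_ ?_ hK1 hK2
    · intro y hy
      have hyS : y ∈ slab π S c ρ := ⟨hKS hy.1, hy.2⟩
      refine (continuousWithinAt_inter (ball_mem_nhds y ht)).1 ?_
      have hsubC : (K ∩ π ⁻¹' closedBall c ρ) ∩ ball y t ⊆ cluster π S c ρ t y := fun w hw =>
        mem_chainComponent_of_dist_lt mem_chainComponent_self hyS ⟨hKS hw.1.1, hw.1.2⟩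
          (by rw [dist_comm]; exact hw.2)
      have hcont := ((hγ _ (h y hy.1 hy.2)).1 y mem_chainComponent_self).mono hsubC
      refine hcont.congr (fun w hw => ?_) ?_
      · have hwc : π w ∈ closedBall c ρ := hw.1.2
        simp only [g, hwc, if_true]
        rw [show cluster π S c ρ t w = cluster π S c ρ t y from chainComponent_eq (hsubC hw)]
      · have hyc : π y ∈ closedBall c ρ := hy.2
        simp only [g, hyc, if_true]
    · exact hπ.continuousOn.congr fun y hy => hg2 y hy.1 hy.2
  · by_cases hyc : π y ∈ closedBall c ρ
    · simp only [g, hyc, if_true]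
      exact (hγ _ (h y hy hyc)).2.1 y mem_chainComponent_self
    · simp only [g, hyc, if_false]
      exact fun h => hyc (ball_subset_closedBall h)

lemma exists_isEssential [NormedSpace ℝ P] (hπ : Continuous π) (hK : IsClosed K) (hKS : K ⊆ S)
    (ht : 0 < t)
    (hρ : 0 < ρ') (hb : dist c' c + ρ' ≤ ρ) (hess : ¬ Inessential π K c ρ) :
    ∃ z ∈ K, IsEssential π S c' ρ' t z := by
  by_contra! hno
  refine hess (.mono_ball hρ (ball_subset_ball' (by linarith)) ?_)
  refine .of_forall_cluster hπ hK hKS ht fun z hz hzb => ?_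
  by_contra hz'
  exact hno z hz ⟨⟨hKS hz, hzb⟩, hz'⟩

lemma IsEssential.exists_restrict [NormedSpace ℝ P] {y : X} (hπ : Continuous π) (hS : IsClosed S)
    (h : IsEssential π S c ρ t y) (ht' : 0 < t') (htt : t' ≤ t) (hρ : 0 < ρ')
    (hb : dist c' c + ρ' ≤ ρ) : ∃ z ∈ cluster π S c ρ t y, IsEssential π S c' ρ' t' z :=
  exists_isEssential hπ (isClosed_cluster hπ hS (ht'.trans_le htt) h.1)
    ((chainComponent_subset h.1).trans inter_subset_left) ht' hρ hb h.2

end Essential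

/-! ### Dyadic cubes -/

section Dyadic

variable {d : ℕ} {ℓ η : ℝ} {i : ℕ} {p q : Fin d → ℝ}

/-- The side length of the dyadic cubes of generation `i`. -/
def scale (ℓ : ℝ) (i : ℕ) : ℝ := ℓ / 2 ^ i

/-- The index of the dyadic cube of generation `i` containing `p`. -/
def cubeIndex (ℓ : ℝ) (i : ℕ) (p : Fin d → ℝ) : Fin d → ℤ := fun j => ⌊p j / scale ℓ i⌋

/-- The center of a dyadic cube. -/
def cubeCenter (ℓ : ℝ) (i : ℕ) (k : Fin d → ℤ) : Fin d → ℝ := fun j => (k j + 1 / 2) * scale ℓ i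

/-- The points of a cube close to its boundary. -/
def boundaryLayer (ℓ η : ℝ) (i : ℕ) (k : Fin d → ℤ) : Set (Fin d → ℝ) :=
  {p | cubeIndex ℓ i p = k ∧ ∃ j, p j < k j * scale ℓ i + η * scale ℓ i ∨
    k j * scale ℓ i + scale ℓ i - η * scale ℓ i ≤ p j}

lemma scale_zero : scale ℓ 0 = ℓ := by simp [scale]

lemma scale_succ : scale ℓ (i + 1) = scale ℓ i / 2 := by
  simp only [scale, pow_succ]; field_simp

lemma scale_pos (hℓ : 0 < ℓ) : 0 < scale ℓ i := by unfold scale; positivity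

lemma scale_le (hℓ : 0 < ℓ) : scale ℓ i ≤ ℓ :=
  div_le_self hℓ.le (one_le_pow₀ (by norm_num))

lemma tendsto_scale : Filter.Tendsto (scale ℓ) Filter.atTop (nhds 0) := by
  have := (tendsto_pow_atTop_nhds_zero_of_lt_one (r := (1 / 2 : ℝ)) (by norm_num)
    (by norm_num)).const_mul ℓ
  rw [mul_zero] at this
  refine this.congr fun i => ?_
  simp [scale, div_eq_mul_inv]

lemma cubeIndex_eq_iff (hℓ : 0 < ℓ) {k : Fin d → ℤ} : cubeIndex ℓ i p = k ↔
    ∀ j, k j * scale ℓ i ≤ p j ∧ p j < k j * scale ℓ i + scale ℓ i := by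
  have hs : 0 < scale ℓ i := scale_pos hℓ
  simp only [funext_iff, cubeIndex, Int.floor_eq_iff, le_div_iff₀ hs, div_lt_iff₀ hs, add_mul,
    one_mul]

lemma dist_cubeCenter_le (hℓ : 0 < ℓ) :
    dist p (cubeCenter ℓ i (cubeIndex ℓ i p)) ≤ scale ℓ i / 2 := by
  have hs : 0 < scale ℓ i := scale_pos hℓ
  refine (dist_pi_le_iff (by positivity)).2 fun j => ?_
  obtain ⟨h1, h2⟩ := (cubeIndex_eq_iff hℓ).1 (rfl : cubeIndex ℓ i p = cubeIndex ℓ i p) j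
  rw [Real.dist_eq, abs_le, cubeCenter, add_mul]
  constructor <;> linarith

lemma dist_cubeCenter_cubeCenter_le (hℓ : 0 < ℓ) {i' : ℕ} :
    dist (cubeCenter ℓ i (cubeIndex ℓ i p)) (cubeCenter ℓ i' (cubeIndex ℓ i' q)) ≤
      scale ℓ i / 2 + dist p q + scale ℓ i' / 2 := by
  have h1 := dist_cubeCenter_le (i := i) (p := p) hℓ
  have h2 := dist_cubeCenter_le (i := i') (p := q) hℓ
  rw [dist_comm] at h1
  linarith [dist_triangle4 (cubeCenter ℓ i (cubeIndex ℓ i p)) p q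
    (cubeCenter ℓ i' (cubeIndex ℓ i' q))]

lemma cubeIndex_succ_div : (fun j => cubeIndex ℓ (i + 1) p j / 2) = cubeIndex ℓ i p := by
  funext j
  simp only [cubeIndex, scale_succ]
  have : p j / scale ℓ i = p j / (scale ℓ i / 2) / (2 : ℕ) := by
    rw [div_div]; congr 1; push_cast; ring
  rw [this, Int.floor_div_natCast]; rfl

lemma setOf_cubeIndex_eq (hℓ : 0 < ℓ) (k : Fin d → ℤ) : {p | cubeIndex ℓ i p = k} =
    Set.pi univ fun j => Ico (k j * scale ℓ i) (k j * scale ℓ i + scale ℓ i) := by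
  ext p; simp [cubeIndex_eq_iff hℓ]

lemma volume_cube (hℓ : 0 < ℓ) (k : Fin d → ℤ) :
    volume {p | cubeIndex ℓ i p = k} = ENNReal.ofReal (scale ℓ i) ^ d := by
  rw [setOf_cubeIndex_eq hℓ, Real.volume_pi_Ico]; simp

lemma measurable_cubeIndex : Measurable (cubeIndex ℓ i : (Fin d → ℝ) → Fin d → ℤ) :=
  measurable_pi_lambda _ fun j => Int.measurable_floor.comp ((measurable_pi_apply j).div_const _)

lemma mem_boundaryLayer (hℓ : 0 < ℓ) (hpq : cubeIndex ℓ i p ≠ cubeIndex ℓ i q)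
    (hd : dist p q < η * scale ℓ i) : p ∈ boundaryLayer ℓ η i (cubeIndex ℓ i p) := by
  have hs : 0 < scale ℓ i := scale_pos hℓ
  refine ⟨rfl, ?_⟩
  by_contra! hno
  refine hpq ((cubeIndex_eq_iff hℓ).2 fun j => ?_).symm
  have := (dist_le_pi_dist p q j).trans_lt hd
  rw [Real.dist_eq, abs_lt] at this
  constructor <;> linarith [hno j]

lemma volume_slice {a : Fin d → ℝ} {s b : ℝ} (hη : 0 ≤ η) (j : Fin d) :
    volume (Set.pi univ fun j' => if j' = j then Ico b (b + η * s) else Ico (a j') (a j' + s)) =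
      ENNReal.ofReal η * ENNReal.ofReal s ^ d := by
  have : ∀ j', volume (if j' = j then Ico b (b + η * s) else Ico (a j') (a j' + s)) =
      (if j' = j then ENNReal.ofReal η else 1) * ENNReal.ofReal s := by
    intro j'
    split_ifs <;> simp [ENNReal.ofReal_mul hη]
  rw [volume_pi_pi, Finset.prod_congr rfl fun j' _ => this j', Finset.prod_mul_distrib]
  simp

lemma volume_boundaryLayer_le (hℓ : 0 < ℓ) (hη : 0 ≤ η) (k : Fin d → ℤ) :
    volume (boundaryLayer ℓ η i k) ≤
      (2 * d * ENNReal.ofReal η) * volume {p | cubeIndex ℓ i p = k} := by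
  have hs : 0 < scale ℓ i := scale_pos hℓ
  let a : Fin d → ℝ := fun j => k j * scale ℓ i
  let B : Fin d → ℝ → Set (Fin d → ℝ) := fun j b => Set.pi univ fun j' =>
    if j' = j then Ico b (b + η * scale ℓ i) else Ico (a j') (a j' + scale ℓ i)
  have hsub : boundaryLayer ℓ η i k ⊆
      ⋃ j, (B j (a j) ∪ B j (a j + scale ℓ i - η * scale ℓ i)) := by
    rintro p ⟨hp, j, hj⟩
    rw [cubeIndex_eq_iff hℓ] at hp
    refine mem_iUnion.2 ⟨j, ?_⟩
    rcases hj with hj | hj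
    · left
      intro j' _
      by_cases h : j' = j
      · subst h; simp only [if_true]; exact ⟨(hp j').1, hj⟩
      · simp only [h, if_false]; exact hp j'
    · right
      intro j' _
      by_cases h : j' = j
      · subst h; simp only [if_true]; exact ⟨hj, by simpa using (hp j').2⟩
      · simp only [h, if_false]; exact hp j'
  calc volume (boundaryLayer ℓ η i k)
      ≤ ∑ j, volume (B j (a j) ∪ B j (a j + scale ℓ i - η * scale ℓ i)) :=
        (measure_mono hsub).trans (measure_iUnion_fintype_le _ _)
    _ ≤ ∑ _j : Fin d, 2 * (ENNReal.ofReal η * ENNReal.ofReal (scale ℓ i) ^ d) := by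
        refine Finset.sum_le_sum fun j _ => (measure_union_le _ _).trans ?_
        simp only [B]
        rw [volume_slice hη, volume_slice hη, two_mul]
    _ = _ := by
        rw [volume_cube hℓ, Finset.sum_const, Finset.card_univ, Fintype.card_fin, nsmul_eq_mul]
        ring

/-- Boundary layers take up a small proportion of any union of cubes. -/
lemma volume_iUnion_boundaryLayer_le (hℓ : 0 < ℓ) (hη : 0 ≤ η) (I : Set (Fin d → ℤ)) :
    volume (⋃ k ∈ I, boundaryLayer ℓ η i k) ≤
      (2 * d * ENNReal.ofReal η) * volume (cubeIndex ℓ i ⁻¹' I) := by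
  have hI : cubeIndex ℓ i ⁻¹' I = ⋃ k ∈ I, {p : Fin d → ℝ | cubeIndex ℓ i p = k} := by
    ext p; simp
  have hIc : I.Countable := I.to_countable
  calc volume (⋃ k ∈ I, boundaryLayer ℓ η i k)
      ≤ ∑' k : I, volume (boundaryLayer ℓ η i (k : Fin d → ℤ)) := measure_biUnion_le _ hIc _
    _ ≤ ∑' k : I, (2 * d * ENNReal.ofReal η) *
          volume {p : Fin d → ℝ | cubeIndex ℓ i p = (k : Fin d → ℤ)} :=
        ENNReal.tsum_le_tsum fun k => volume_boundaryLayer_le hℓ hη _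
    _ = _ := by
        rw [ENNReal.tsum_mul_left, hI, measure_biUnion hIc]
        · intro k _ k' _ hkk
          exact disjoint_left.2 fun p (hp : _ = _) (hp' : _ = _) => hkk (hp.symm.trans hp')
        · intro k _
          exact measurable_cubeIndex (measurableSet_singleton k)

end Dyadic

/-! ### Measure estimates -/

section Measure

variable {X : Type*} [MeasurableSpace X] {μ : Measure X}

/-- In a decreasing sequence of measurable sets, the losses over five steps add up to at most five
times the total mass. -/
lemma tsum_measure_diff_le {T : ℕ → Set X} (hT : ∀ i, MeasurableSet (T i))
    (hanti : Antitone T) : ∑' i, μ (T i \ T (i + 5)) ≤ 5 * μ (T 0) := by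
  let D : ℕ → Set X := fun i => T i \ T (i + 1)
  have hDm : ∀ i, MeasurableSet (D i) := fun i => (hT i).diff (hT (i + 1))
  have hDd : Pairwise (Function.onFun Disjoint D) := by
    have key : ∀ i j, i < j → Disjoint (D i) (D j) := fun i j hij =>
      disjoint_left.2 fun x hx hx' => hx.2 (hanti hij hx'.1)
    intro i j hij
    rcases lt_or_gt_of_ne hij with h | h
    · exact key i j h
    · exact (key j i h).symm
  have hsum : ∀ j : ℕ, ∑' i, μ (D (i + j)) ≤ μ (T 0) := by
    intro j
    rw [← measure_iUnion (f := fun i => D (i + j)) (fun a b hab => hDd (by omega)) fun i => hDm _]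
    exact measure_mono (iUnion_subset fun i => sdiff_subset.trans (hanti (Nat.zero_le _)))
  have hle : ∀ i, μ (T i \ T (i + 5)) ≤ ∑ j ∈ Finset.range 5, μ (D (i + j)) := by
    intro i
    refine (measure_mono ?_).trans (measure_biUnion_finset_le _ _)
    intro x hx
    by_contra hno
    simp only [mem_iUnion, Finset.mem_range, not_exists] at hno
    have : ∀ j ≤ 5, x ∈ T (i + j) := by
      intro j
      induction j with
      | zero => exact fun _ => hx.1
      | succ j ih => exact fun hj => by_contra fun h => hno j hj ⟨ih (by omega), h⟩
    exact hx.2 (this 5 le_rfl)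
  calc ∑' i, μ (T i \ T (i + 5)) ≤ ∑' i, ∑ j ∈ Finset.range 5, μ (D (i + j)) :=
        ENNReal.tsum_le_tsum hle
    _ = ∑ j ∈ Finset.range 5, ∑' i, μ (D (i + j)) :=
        Summable.tsum_finsetSum fun _ _ => ENNReal.summable
    _ ≤ ∑ j ∈ Finset.range 5, μ (T 0) := Finset.sum_le_sum fun j _ => hsum j
    _ = 5 * μ (T 0) := by simp

/-- A weak-type estimate for the maximal function of the image measure. -/
lemma volume_maximal_le {d : ℕ} {π : X → Fin d → ℝ} (hπ : Measurable π) {S : Set X}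
    {l : ℝ≥0∞} {R : ℝ} {s : ℕ → ℝ} (hs : ∀ i, 0 < s i) (hsR : ∀ i, s i ≤ R) :
    l * volume {p : Fin d → ℝ | ∃ i, l * ENNReal.ofReal (s i) ^ d ≤
      μ (S ∩ π ⁻¹' closedBall p (7 * s i))} ≤ 56 ^ d * μ S := by
  set Z := {p : Fin d → ℝ | ∃ i, l * ENNReal.ofReal (s i) ^ d ≤
    μ (S ∩ π ⁻¹' closedBall p (7 * s i))}
  choose! m hm using show ∀ p ∈ Z, ∃ i, l * ENNReal.ofReal (s i) ^ d ≤
    μ (S ∩ π ⁻¹' closedBall p (7 * s i)) from fun p hp => hp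
  obtain ⟨u, huZ, hud, hu⟩ := Vitali.exists_disjoint_subfamily_covering_enlargement_closedBall Z
    (fun p => p) (fun p => 7 * s (m p)) (7 * R) (fun p _ => by linarith [hsR (m p)]) 4 (by norm_num)
  have huc : u.Countable := hud.countable_of_nonempty_interior fun p _ => by
    have : (ball p (7 * s (m p))).Nonempty := nonempty_ball.2 (by linarith [hs (m p)])
    exact this.mono ball_subset_interior_closedBall
  have hcov : Z ⊆ ⋃ p ∈ u, closedBall p (28 * s (m p)) := by
    intro p hp
    obtain ⟨b, hb, hsub⟩ := hu p hp
    refine mem_biUnion hb ?_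
    have := hsub (mem_closedBall_self (by linarith [hs (m p)]))
    simpa only [← mul_assoc, show (4 : ℝ) * 7 = 28 by norm_num] using this
  calc l * volume Z ≤ l * ∑' p : u, volume (closedBall (p : Fin d → ℝ) (28 * s (m p))) := by
        gcongr; exact (measure_mono hcov).trans (measure_biUnion_le _ huc _)
    _ = ∑' p : u, 56 ^ d * (l * ENNReal.ofReal (s (m p)) ^ d) := by
        rw [← ENNReal.tsum_mul_left]
        refine tsum_congr fun p => ?_
        rw [Real.volume_pi_closedBall _ (by linarith [hs (m p)]), Fintype.card_fin, ← mul_assoc,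
          ENNReal.ofReal_pow (by linarith [hs (m p)]), ENNReal.ofReal_mul (by norm_num), mul_pow]
        norm_num
        ring
    _ ≤ ∑' p : u, 56 ^ d * μ.restrict S (π ⁻¹' closedBall (p : Fin d → ℝ) (7 * s (m p))) := by
        refine ENNReal.tsum_le_tsum fun p => ?_
        rw [Measure.restrict_apply (hπ isClosed_closedBall.measurableSet), inter_comm]
        gcongr
        exact hm p (huZ p.2)
    _ = 56 ^ d * μ.restrict S (⋃ p ∈ u, π ⁻¹' closedBall p (7 * s (m p))) := by
        rw [ENNReal.tsum_mul_left, measure_biUnion huc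
          (fun a ha b hb hab => (hud ha hb hab).preimage π)
          fun p _ => hπ isClosed_closedBall.measurableSet]
    _ ≤ 56 ^ d * μ S := by
        gcongr _ * ?_
        exact (measure_mono (subset_univ _)).trans (Measure.restrict_apply_univ S).le

end Measure

/-! ### Trees of clusters -/

section Tree

variable {d : ℕ} {X : Type*} [MetricSpace X] {π : X → Fin d → ℝ} {S : Set X} {ℓ : ℝ}

/-- The cluster of `z` over the dilate by `a` of a ball around the cube `k` of generation `i`. -/
def dyadicCluster (π : X → Fin d → ℝ) (S : Set X) (ℓ a : ℝ) (i : ℕ) (k : Fin d → ℤ) (z : X) :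
    Set X :=
  cluster π S (cubeCenter ℓ i k) (a * scale ℓ i) (scale ℓ i) z

/-- The cluster `dyadicCluster π S ℓ a i k z` is essential. -/
def IsDyadicEssential (π : X → Fin d → ℝ) (S : Set X) (ℓ a : ℝ) (i : ℕ) (k : Fin d → ℤ) (z : X) :
    Prop :=
  IsEssential π S (cubeCenter ℓ i k) (a * scale ℓ i) (scale ℓ i) z

/-- A choice, compatible with inclusions, of an essential cluster over a neighborhood of each
dyadic cube contained in `[0, ℓ)ᵈ`; the cluster is recorded by one of its points. -/
def IsClusterTree (π : X → Fin d → ℝ) (S : Set X) (ℓ : ℝ) (Y : ℕ → (Fin d → ℤ) → X) : Prop :=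
  ∀ p, cubeIndex ℓ 0 p = 0 → ∀ i,
    IsDyadicEssential π S ℓ 6 i (cubeIndex ℓ i p) (Y i (cubeIndex ℓ i p)) ∧
    Y (i + 1) (cubeIndex ℓ (i + 1) p) ∈
      dyadicCluster π S ℓ 6 i (cubeIndex ℓ i p) (Y i (cubeIndex ℓ i p))

/-- The cluster selected by `Y` over the cube of generation `i` containing `p`. -/
def treeCluster (π : X → Fin d → ℝ) (S : Set X) (ℓ : ℝ) (Y : ℕ → (Fin d → ℤ) → X) (i : ℕ)
    (p : Fin d → ℝ) : Set X :=
  dyadicCluster π S ℓ 6 i (cubeIndex ℓ i p) (Y i (cubeIndex ℓ i p))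

/-- The cluster selected over the parent of the cube `k` contains several essential clusters over a
small neighborhood of `k`. -/
def IsAmbiguous (π : X → Fin d → ℝ) (S : Set X) (ℓ : ℝ) (Y : ℕ → (Fin d → ℤ) → X) (i : ℕ)
    (k : Fin d → ℤ) : Prop :=
  ∃ u v, u ∈ dyadicCluster π S ℓ 6 i (fun j => k j / 2) (Y i fun j => k j / 2) ∧
    v ∈ dyadicCluster π S ℓ 6 i (fun j => k j / 2) (Y i fun j => k j / 2) ∧
    IsDyadicEssential π S ℓ 1 (i + 1) k u ∧ IsDyadicEssential π S ℓ 1 (i + 1) k v ∧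
    dyadicCluster π S ℓ 1 (i + 1) k u ≠ dyadicCluster π S ℓ 1 (i + 1) k v

lemma exists_isClusterTree (hπ : Continuous π) (hS : IsClosed S) (hℓ : 0 < ℓ)
    (hess : ¬ Inessential π S (cubeCenter ℓ 0 0) (6 * ℓ)) :
    ∃ Y, IsClusterTree π S ℓ Y := by
  obtain ⟨y₀, -, hy₀⟩ := exists_isEssential hπ hS Subset.rfl hℓ
    (c' := cubeCenter ℓ 0 0) (ρ' := 6 * ℓ) (by positivity) (by simp) hess
  have : Nonempty X := ⟨y₀⟩
  let Y : ℕ → (Fin d → ℤ) → X := fun i => Nat.rec (fun _ => y₀)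
    (fun i f k => Classical.epsilon fun z =>
      z ∈ dyadicCluster π S ℓ 6 i (fun j => k j / 2) (f fun j => k j / 2) ∧
        IsDyadicEssential π S ℓ 6 (i + 1) k z) i
  have step : ∀ p i, IsDyadicEssential π S ℓ 6 i (cubeIndex ℓ i p) (Y i (cubeIndex ℓ i p)) →
      Y (i + 1) (cubeIndex ℓ (i + 1) p) ∈
        dyadicCluster π S ℓ 6 i (cubeIndex ℓ i p) (Y i (cubeIndex ℓ i p)) ∧
      IsDyadicEssential π S ℓ 6 (i + 1) (cubeIndex ℓ (i + 1) p)
        (Y (i + 1) (cubeIndex ℓ (i + 1) p)) := by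
    intro p i h
    have hs : 0 < scale ℓ i := scale_pos hℓ
    have hss : scale ℓ (i + 1) = scale ℓ i / 2 := scale_succ
    have hex := h.exists_restrict hπ hS (t' := scale ℓ (i + 1)) (ρ' := 6 * scale ℓ (i + 1))
      (c' := cubeCenter ℓ (i + 1) (cubeIndex ℓ (i + 1) p)) (scale_pos hℓ) (by linarith)
      (by linarith) (by
        have := dist_cubeCenter_cubeCenter_le (i := i + 1) (i' := i) (p := p) (q := p) hℓ
        rw [dist_self] at this
        linarith)
    have := Classical.epsilon_spec hex
    simp only [← cubeIndex_succ_div (i := i)] at this ⊢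
    exact this
  refine ⟨Y, fun p hp => ?_⟩
  have h0 : IsDyadicEssential π S ℓ 6 0 (cubeIndex ℓ 0 p) (Y 0 (cubeIndex ℓ 0 p)) := by
    rw [IsDyadicEssential, hp, scale_zero]; exact hy₀
  have hall : ∀ i, IsDyadicEssential π S ℓ 6 i (cubeIndex ℓ i p) (Y i (cubeIndex ℓ i p)) := by
    intro i
    induction i with
    | zero => exact h0
    | succ i ih => exact (step p i ih).2
  exact fun i => ⟨hall i, (step p i (hall i)).1⟩

variable {Y : ℕ → (Fin d → ℤ) → X} {p q : Fin d → ℝ} {i : ℕ}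

lemma treeCluster_subset_slab (hY : IsClusterTree π S ℓ Y) (hp : cubeIndex ℓ 0 p = 0) :
    treeCluster π S ℓ Y i p ⊆ slab π S (cubeCenter ℓ i (cubeIndex ℓ i p)) (6 * scale ℓ i) :=
  chainComponent_subset (hY p hp i).1.1

lemma treeCluster_succ_subset (hℓ : 0 < ℓ) (hY : IsClusterTree π S ℓ Y)
    (hp : cubeIndex ℓ 0 p = 0) : treeCluster π S ℓ Y (i + 1) p ⊆ treeCluster π S ℓ Y i p := by
  have hs : 0 < scale ℓ i := scale_pos hℓ
  have hss : scale ℓ (i + 1) = scale ℓ i / 2 := scale_succ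
  have := dist_cubeCenter_cubeCenter_le (i := i + 1) (i' := i) (p := p) (q := p) hℓ
  rw [dist_self] at this
  exact cluster_subset_of_mem (by linarith) (by linarith) (hY p hp i).2

lemma isClosed_treeCluster (hπ : Continuous π) (hS : IsClosed S) (hℓ : 0 < ℓ)
    (hY : IsClusterTree π S ℓ Y) (hp : cubeIndex ℓ 0 p = 0) :
    IsClosed (treeCluster π S ℓ Y i p) :=
  isClosed_cluster hπ hS (scale_pos hℓ) (hY p hp i).1.1

lemma exists_mem_treeClusters (hπ : Continuous π) (hS : IsCompact S) (hℓ : 0 < ℓ)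
    (hY : IsClusterTree π S ℓ Y) (hp : cubeIndex ℓ 0 p = 0) :
    ∃ y, π y = p ∧ ∀ i, y ∈ treeCluster π S ℓ Y i p := by
  have hcl : ∀ i, IsClosed (treeCluster π S ℓ Y i p) := fun i =>
    isClosed_treeCluster hπ hS.isClosed hℓ hY hp
  obtain ⟨y, hy⟩ := IsCompact.nonempty_iInter_of_sequence_nonempty_isCompact_isClosed
    (fun i => treeCluster π S ℓ Y i p) (fun i => treeCluster_succ_subset hℓ hY hp)
    (fun i => ⟨_, mem_chainComponent_self⟩)
    (hS.of_isClosed_subset (hcl 0) ((treeCluster_subset_slab hY hp).trans inter_subset_left)) hcl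
  rw [mem_iInter] at hy
  refine ⟨y, ?_, hy⟩
  have hle : ∀ i, dist (π y) p ≤ 7 * scale ℓ i := fun i => by
    have h1 : dist (π y) (cubeCenter ℓ i (cubeIndex ℓ i p)) ≤ 6 * scale ℓ i :=
      (treeCluster_subset_slab hY hp (hy i)).2
    have h2 := dist_cubeCenter_le (p := p) (i := i) hℓ
    have h3 : 0 < scale ℓ i := scale_pos hℓ
    linarith [dist_triangle_right (π y) p (cubeCenter ℓ i (cubeIndex ℓ i p))]
  have := ge_of_tendsto' (tendsto_scale (ℓ := ℓ) |>.const_mul 7) hle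
  rw [mul_zero] at this
  exact dist_le_zero.1 this

/-- Over an ambiguous cube, part of the selected cluster is discarded within five generations. -/
lemma exists_mem_treeCluster_of_isAmbiguous (hπ : Continuous π) (hℓ : 0 < ℓ)
    (hamb : IsAmbiguous π S ℓ Y i (cubeIndex ℓ (i + 1) p)) :
    ∃ y ∈ treeCluster π S ℓ Y i p, π y = p ∧ y ∉ treeCluster π S ℓ Y (i + 5) p := by
  obtain ⟨u, v, hu, hv, hue, hve, hne⟩ := hamb
  simp only [cubeIndex_succ_div] at hu hv
  have hs : 0 < scale ℓ i := scale_pos hℓ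
  have hs1 : scale ℓ (i + 1) = scale ℓ i / 2 := scale_succ
  have hs5 : scale ℓ (i + 5) = scale ℓ i / 32 := by
    rw [scale_succ, scale_succ, scale_succ, scale_succ, scale_succ]; ring
  have h15 := dist_cubeCenter_cubeCenter_le (i := i + 5) (i' := i + 1) (p := p) (q := p) hℓ
  have h01 := dist_cubeCenter_cubeCenter_le (i := i + 1) (i' := i) (p := p) (q := p) hℓ
  rw [dist_self] at h15 h01
  have key : ∀ w, w ∈ treeCluster π S ℓ Y i p →
      IsDyadicEssential π S ℓ 1 (i + 1) (cubeIndex ℓ (i + 1) p) w →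
      Disjoint (treeCluster π S ℓ Y (i + 5) p)
        (dyadicCluster π S ℓ 1 (i + 1) (cubeIndex ℓ (i + 1) p) w) →
      ∃ y ∈ treeCluster π S ℓ Y i p, π y = p ∧ y ∉ treeCluster π S ℓ Y (i + 5) p := by
    intro w hw hwe hdis
    have hpb : p ∈ ball (cubeCenter ℓ (i + 1) (cubeIndex ℓ (i + 1) p)) (1 * scale ℓ (i + 1)) := by
      rw [mem_ball]
      linarith [dist_cubeCenter_le (p := p) (i := i + 1) hℓ]
    obtain ⟨y, hy, hyp⟩ := ball_subset_image_of_not_inessential hπ hwe.2 hpb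
    exact ⟨y, cluster_subset_of_mem (by linarith) (by linarith) hw hy, hyp,
      fun h => disjoint_left.1 hdis h hy⟩
  by_contra hno
  have hmeet : ∀ w, w ∈ treeCluster π S ℓ Y i p →
      IsDyadicEssential π S ℓ 1 (i + 1) (cubeIndex ℓ (i + 1) p) w →
      Y (i + 5) (cubeIndex ℓ (i + 5) p) ∈
        dyadicCluster π S ℓ 1 (i + 1) (cubeIndex ℓ (i + 1) p) w := by
    intro w hw hwe
    by_contra hYw
    refine hno (key w hw hwe (disjoint_left.2 fun y hy hyw => hYw ?_))
    have h1 : treeCluster π S ℓ Y (i + 5) p ⊆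
        dyadicCluster π S ℓ 1 (i + 1) (cubeIndex ℓ (i + 1) p) w := by
      have : dyadicCluster π S ℓ 6 (i + 5) (cubeIndex ℓ (i + 5) p) y =
          treeCluster π S ℓ Y (i + 5) p :=
        chainComponent_eq hy
      rw [← this]
      exact cluster_subset_of_mem (by linarith) (by linarith) hyw
    exact h1 mem_chainComponent_self
  exact hne ((chainComponent_eq (hmeet u hu hue)).symm.trans (chainComponent_eq (hmeet v hv hve)))

/-- If the cubes containing two nearby points only separate where there is no ambiguity, then the
clusters selected over them meet. -/
lemma exists_mem_treeCluster_inter (hπ : Continuous π) (hS : IsClosed S) (hℓ : 0 < ℓ)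
    (hY : IsClusterTree π S ℓ Y) (hp : cubeIndex ℓ 0 p = 0) (hq : cubeIndex ℓ 0 q = 0) {m : ℕ}
    (hpq : dist p q ≤ scale ℓ m / 4)
    (hamb : ∀ i < m, cubeIndex ℓ (i + 1) p ≠ cubeIndex ℓ (i + 1) q →
      ¬ IsAmbiguous π S ℓ Y i (cubeIndex ℓ (i + 1) p) ∧
      ¬ IsAmbiguous π S ℓ Y i (cubeIndex ℓ (i + 1) q)) :
    ∃ z ∈ treeCluster π S ℓ Y m p ∩ treeCluster π S ℓ Y m q,
      IsDyadicEssential π S ℓ (9 / 2) m (cubeIndex ℓ m p) z := by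
  have hsame : ∀ m, cubeIndex ℓ m p = cubeIndex ℓ m q →
      ∃ z ∈ treeCluster π S ℓ Y m p ∩ treeCluster π S ℓ Y m q,
        IsDyadicEssential π S ℓ (9 / 2) m (cubeIndex ℓ m p) z := by
    intro m hm
    have hs : 0 < scale ℓ m := scale_pos hℓ
    obtain ⟨z, hz, hze⟩ := (hY p hp m).1.exists_restrict hπ hS hs le_rfl
      (c' := cubeCenter ℓ m (cubeIndex ℓ m p)) (ρ' := 9 / 2 * scale ℓ m)
      (by linarith) (by rw [dist_self]; linarith)
    refine ⟨z, ⟨hz, ?_⟩, hze⟩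
    rw [treeCluster, ← hm]; exact hz
  induction m with
  | zero => exact hsame 0 (hp.trans hq.symm)
  | succ m ih =>
    by_cases hidx : cubeIndex ℓ (m + 1) p = cubeIndex ℓ (m + 1) q
    · exact hsame _ hidx
    have hs : 0 < scale ℓ m := scale_pos hℓ
    have hs1 : scale ℓ (m + 1) = scale ℓ m / 2 := scale_succ
    obtain ⟨z, ⟨hzp, hzq⟩, hze⟩ := ih (by linarith) fun i hi => hamb i (by omega)
    obtain ⟨hap, haq⟩ := hamb m (by omega) hidx
    set L := dyadicCluster π S ℓ (9 / 2) m (cubeIndex ℓ m p) z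
    have hdpq := dist_cubeCenter_cubeCenter_le (i := m) (i' := m) (p := p) (q := q) hℓ
    have hLp : L ⊆ treeCluster π S ℓ Y m p :=
      cluster_subset_of_mem (by rw [dist_self]; linarith) le_rfl hzp
    have hLq : L ⊆ treeCluster π S ℓ Y m q :=
      cluster_subset_of_mem (by linarith) le_rfl hzq
    -- the selected clusters of the next generation lie in `L`
    have next : ∀ w, cubeIndex ℓ 0 w = 0 → dist w p ≤ scale ℓ (m + 1) / 4 →
        L ⊆ treeCluster π S ℓ Y m w → ¬ IsAmbiguous π S ℓ Y m (cubeIndex ℓ (m + 1) w) →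
        treeCluster π S ℓ Y (m + 1) w ⊆ L := by
      intro w hw hwp hLw hambw
      set k := cubeIndex ℓ (m + 1) w with hk
      have hd1 := dist_cubeCenter_cubeCenter_le (i := m + 1) (i' := m) (p := w) (q := p) hℓ
      obtain ⟨a, haL, hae⟩ := hze.exists_restrict hπ hS (t' := scale ℓ (m + 1))
        (c' := cubeCenter ℓ (m + 1) k) (ρ' := 6 * scale ℓ (m + 1)) (scale_pos hℓ) (by linarith)
        (by linarith) (by linarith)
      have core : ∀ b, IsDyadicEssential π S ℓ 6 (m + 1) k b →
          ∃ z ∈ dyadicCluster π S ℓ 6 (m + 1) k b, IsDyadicEssential π S ℓ 1 (m + 1) k z :=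
        fun b hb => hb.exists_restrict hπ hS (scale_pos hℓ) le_rfl (by linarith)
          (by rw [dist_self]; linarith)
      obtain ⟨a', ha', hae'⟩ := core a hae
      obtain ⟨b', hb', hbe'⟩ := core _ (hY w hw (m + 1)).1
      have haL' : dyadicCluster π S ℓ 6 (m + 1) k a ⊆ L :=
        cluster_subset_of_mem (by linarith) (by linarith) haL
      have heq : dyadicCluster π S ℓ 1 (m + 1) k a' = dyadicCluster π S ℓ 1 (m + 1) k b' := by
        by_contra hne
        refine hambw ⟨a', b', ?_, ?_, hae', hbe', hne⟩
        · rw [hk, cubeIndex_succ_div]; exact hLw (haL' ha')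
        · rw [hk, cubeIndex_succ_div]; exact treeCluster_succ_subset hℓ hY hw hb'
      have hb'a : b' ∈ dyadicCluster π S ℓ 6 (m + 1) k a := by
        have h1 : b' ∈ dyadicCluster π S ℓ 1 (m + 1) k a' := heq ▸ mem_chainComponent_self
        exact cluster_subset_of_mem (by rw [dist_self]; linarith) le_rfl ha' h1
      have : treeCluster π S ℓ Y (m + 1) w = dyadicCluster π S ℓ 6 (m + 1) k a :=
        (chainComponent_eq hb').symm.trans (chainComponent_eq hb'a)
      rw [this]; exact haL'
    have hKp := next p hp (by rw [dist_self]; linarith) hLp hap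
    have hKq := next q hq (by rw [dist_comm]; exact hpq) hLq haq
    have hd1 := dist_cubeCenter_cubeCenter_le (i := m + 1) (i' := m + 1) (p := p) (q := q) hℓ
    set k := cubeIndex ℓ (m + 1) p with hk
    obtain ⟨α, hα, hαe⟩ := (hY p hp (m + 1)).1.exists_restrict hπ hS (scale_pos hℓ) le_rfl
      (c' := cubeCenter ℓ (m + 1) k) (ρ' := 9 / 2 * scale ℓ (m + 1)) (by linarith)
      (by rw [dist_self]; linarith)
    obtain ⟨β, hβ, hβe⟩ := (hY q hq (m + 1)).1.exists_restrict hπ hS (scale_pos hℓ) le_rfl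
      (c' := cubeCenter ℓ (m + 1) k) (ρ' := 9 / 2 * scale ℓ (m + 1)) (by linarith) (by linarith)
    have core : ∀ b, IsDyadicEssential π S ℓ (9 / 2) (m + 1) k b →
        ∃ z ∈ dyadicCluster π S ℓ (9 / 2) (m + 1) k b, IsDyadicEssential π S ℓ 1 (m + 1) k z :=
      fun b hb => hb.exists_restrict hπ hS (scale_pos hℓ) le_rfl (by linarith)
        (by rw [dist_self]; linarith)
    obtain ⟨α', hα', hαe'⟩ := core α hαe
    obtain ⟨β', hβ', hβe'⟩ := core β hβe
    have hαK : dyadicCluster π S ℓ (9 / 2) (m + 1) k α ⊆ treeCluster π S ℓ Y (m + 1) p :=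
      cluster_subset_of_mem (by rw [dist_self]; linarith) le_rfl hα
    have hβK : dyadicCluster π S ℓ (9 / 2) (m + 1) k β ⊆ treeCluster π S ℓ Y (m + 1) q :=
      cluster_subset_of_mem (by linarith) le_rfl hβ
    have heq : dyadicCluster π S ℓ 1 (m + 1) k α' = dyadicCluster π S ℓ 1 (m + 1) k β' := by
      by_contra hne
      refine hap ⟨α', β', ?_, ?_, hαe', hβe', hne⟩
      · rw [hk, cubeIndex_succ_div]; exact hLp (hKp (hαK hα'))
      · rw [hk, cubeIndex_succ_div]; exact hLp (hKq (hβK hβ'))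
    have h1 : α' ∈ dyadicCluster π S ℓ (9 / 2) (m + 1) k β := by
      have h1 : α' ∈ dyadicCluster π S ℓ 1 (m + 1) k β' := heq ▸ mem_chainComponent_self
      exact cluster_subset_of_mem (by rw [dist_self]; linarith) le_rfl hβ' h1
    have h2 : α ∈ dyadicCluster π S ℓ (9 / 2) (m + 1) k β := by
      have : dyadicCluster π S ℓ (9 / 2) (m + 1) k α = dyadicCluster π S ℓ (9 / 2) (m + 1) k β :=
        (chainComponent_eq hα').symm.trans (chainComponent_eq h1)
      rw [← this]; exact mem_chainComponent_self
    exact ⟨α, ⟨hα, hβK h2⟩, hαe⟩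

end Tree

/-! ### Lipschitz sections -/

section LipschitzSection

variable {d : ℕ} {X : Type*} [MetricSpace X] [MeasurableSpace X] [BorelSpace X]
  {π : X → Fin d → ℝ} {S : Set X} {ℓ : ℝ} {Y : ℕ → (Fin d → ℤ) → X}

lemma cubeIndex_zero_eq_of_cubeIndex_eq {p q : Fin d → ℝ} {i : ℕ}
    (h : cubeIndex ℓ i p = cubeIndex ℓ i q) : cubeIndex ℓ 0 p = cubeIndex ℓ 0 q := by
  induction i with
  | zero => exact h
  | succ i ih =>
    refine ih ?_
    rw [← cubeIndex_succ_div (p := p), ← cubeIndex_succ_div (p := q), h]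

lemma measurableSet_treeCluster (hπ : Continuous π) (hS : IsClosed S) (hℓ : 0 < ℓ)
    (hY : IsClusterTree π S ℓ Y) (i : ℕ) :
    MeasurableSet {y | cubeIndex ℓ 0 (π y) = 0 ∧ y ∈ treeCluster π S ℓ Y i (π y)} := by
  have h : {y | cubeIndex ℓ 0 (π y) = 0 ∧ y ∈ treeCluster π S ℓ Y i (π y)} =
      ⋃ k, {y | cubeIndex ℓ 0 (π y) = 0 ∧ cubeIndex ℓ i (π y) = k ∧
        y ∈ dyadicCluster π S ℓ 6 i k (Y i k)} := by
    ext y; simp [treeCluster]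
  rw [h]
  refine MeasurableSet.iUnion fun k => ?_
  by_cases hk : ∃ p, cubeIndex ℓ 0 p = 0 ∧ cubeIndex ℓ i p = k
  · obtain ⟨p, hp, rfl⟩ := hk
    have hi : ∀ i (k : Fin d → ℤ), MeasurableSet {y | cubeIndex ℓ i (π y) = k} := fun i k =>
      (measurable_cubeIndex.comp hπ.measurable) (measurableSet_singleton k)
    exact (hi 0 0).inter ((hi i _).inter
      (isClosed_treeCluster (i := i) hπ hS hℓ hY hp).measurableSet)
  · convert MeasurableSet.empty
    ext y
    simp only [mem_ofPred_eq, mem_empty_iff_false, iff_false]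
    exact fun hy => hk ⟨π y, hy.1, hy.2.1⟩

/-- The ambiguous cubes contained in `[0, ℓ)ᵈ`. -/
def ambiguousCubes (π : X → Fin d → ℝ) (S : Set X) (ℓ : ℝ) (Y : ℕ → (Fin d → ℤ) → X) (i : ℕ) :
    Set (Fin d → ℤ) :=
  {k | IsAmbiguous π S ℓ Y i k ∧ ∃ p, cubeIndex ℓ 0 p = 0 ∧ cubeIndex ℓ (i + 1) p = k}

lemma tsum_volume_ambiguousCubes_le (hπ : LipschitzWith 1 π) (hS : IsClosed S) (hℓ : 0 < ℓ)
    (hY : IsClusterTree π S ℓ Y) :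
    ∑' i, volume (cubeIndex ℓ (i + 1) ⁻¹' ambiguousCubes π S ℓ Y i) ≤ 5 * μH[(d : ℝ)] S := by
  let T : ℕ → Set X := fun i => {y | cubeIndex ℓ 0 (π y) = 0 ∧ y ∈ treeCluster π S ℓ Y i (π y)}
  have hle : ∀ i, volume (cubeIndex ℓ (i + 1) ⁻¹' ambiguousCubes π S ℓ Y i) ≤
      μH[(d : ℝ)] (T i \ T (i + 5)) := by
    intro i
    have hsub : cubeIndex ℓ (i + 1) ⁻¹' ambiguousCubes π S ℓ Y i ⊆ π '' (T i \ T (i + 5)) := by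
      rintro p ⟨hamb, q, hq, hqp⟩
      have hp : cubeIndex ℓ 0 p = 0 := (cubeIndex_zero_eq_of_cubeIndex_eq hqp).symm.trans hq
      obtain ⟨y, hy, rfl, hy'⟩ := exists_mem_treeCluster_of_isAmbiguous hπ.continuous hℓ hamb
      exact ⟨y, ⟨⟨hp, hy⟩, fun h => hy' h.2⟩, rfl⟩
    have h1 := hπ.hausdorffMeasure_image_le (d := (d : ℝ)) (by positivity) (T i \ T (i + 5))
    have h2 : (μH[(d : ℝ)] : Measure (Fin d → ℝ)) = volume := by
      have := hausdorffMeasure_pi_real (ι := Fin d)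
      rwa [Fintype.card_fin] at this
    rw [h2] at h1
    exact (measure_mono hsub).trans (by simpa using h1)
  calc ∑' i, volume (cubeIndex ℓ (i + 1) ⁻¹' ambiguousCubes π S ℓ Y i)
      ≤ ∑' i, μH[(d : ℝ)] (T i \ T (i + 5)) := ENNReal.tsum_le_tsum hle
    _ ≤ 5 * μH[(d : ℝ)] (T 0) :=
        tsum_measure_diff_le (fun i => measurableSet_treeCluster hπ.continuous hS hℓ hY i)
          (antitone_nat_of_succ_le fun i y hy => ⟨hy.1, treeCluster_succ_subset hℓ hY hy.1 hy.2⟩)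
    _ ≤ 5 * μH[(d : ℝ)] S := by
        gcongr
        exact fun y hy => (treeCluster_subset_slab hY hy.1 hy.2).1

/-- Where the density of the image of `S` is bounded, the selected clusters have diameter comparable
to the side length of the cubes. -/
lemma dist_lt_of_mem_treeCluster (hπ : LipschitzWith 1 π) (hS : IsClosed S) (hℓ : 0 < ℓ)
    (hY : IsClusterTree π S ℓ Y) {p : Fin d → ℝ} (hp : cubeIndex ℓ 0 p = 0) {c₁ l : ℝ} {N : ℕ}
    (hN : l ≤ (N + 1) * (c₁ / 2 ^ d))
    (hlow : ∀ y ∈ S, π y ∈ closedBall (cubeCenter ℓ 0 0) (7 * ℓ) → ∀ t, 0 < t → t ≤ ℓ →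
      ENNReal.ofReal (c₁ * t ^ d) ≤ μH[(d : ℝ)] (S ∩ ball y t)) {i : ℕ}
    (hdens : μH[(d : ℝ)] (S ∩ π ⁻¹' closedBall p (7 * scale ℓ i)) <
      ENNReal.ofReal l * ENNReal.ofReal (scale ℓ i) ^ d)
    {u v : X} (hu : u ∈ treeCluster π S ℓ Y i p) (hv : v ∈ treeCluster π S ℓ Y i p) :
    dist u v < 2 * scale ℓ i * N := by
  have hs : 0 < scale ℓ i := scale_pos hℓ
  have hsℓ : scale ℓ i ≤ ℓ := scale_le hℓ
  have hpc := dist_cubeCenter_le (p := p) (i := i) hℓ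
  have hp0 := dist_cubeCenter_le (p := p) (i := 0) hℓ
  rw [hp, scale_zero] at hp0
  have huv : v ∈ cluster π S (cubeCenter ℓ i (cubeIndex ℓ i p)) (6 * scale ℓ i) (scale ℓ i) u := by
    have := chainComponent_eq hu
    rw [cluster, this]; exact hv
  refine dist_lt_of_mem_chainComponent (μ := μH[(d : ℝ)])
    (T := S ∩ π ⁻¹' closedBall p (7 * scale ℓ i))
    (hS.inter (isClosed_closedBall.preimage hπ.continuous)).measurableSet hs
    (treeCluster_subset_slab hY hp hu) (κ := ENNReal.ofReal (c₁ * (scale ℓ i / 2) ^ d))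
    (fun a ha => ?_) (hdens.trans_le ?_) huv
  · have hac : dist (π a) (cubeCenter ℓ i (cubeIndex ℓ i p)) ≤ 6 * scale ℓ i := ha.2
    have hap : dist (π a) p ≤ 13 / 2 * scale ℓ i := by
      linarith [dist_triangle_right (π a) p (cubeCenter ℓ i (cubeIndex ℓ i p))]
    refine (hlow a ha.1 ?_ (scale ℓ i / 2) (by positivity) (by linarith)).trans (measure_mono ?_)
    · rw [mem_closedBall]
      linarith [dist_triangle (π a) p (cubeCenter ℓ 0 0)]
    · intro y hy
      refine ⟨⟨hy.1, ?_⟩, hy.2⟩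
      have h1 : dist (π y) (π a) ≤ dist y a := by simpa using hπ.dist_le_mul y a
      have h2 : dist y a < scale ℓ i / 2 := hy.2
      rw [mem_preimage, mem_closedBall]
      linarith [dist_triangle (π y) (π a) p]
  · rw [← ENNReal.ofReal_pow hs.le, ← ENNReal.ofReal_mul' (by positivity),
      show ((N : ℝ≥0∞) + 1) = ENNReal.ofReal (N + 1) by
        rw [ENNReal.ofReal_add (by positivity) zero_le_one]; simp,
      ← ENNReal.ofReal_mul (by positivity)]
    refine ENNReal.ofReal_le_ofReal ?_
    calc l * scale ℓ i ^ d ≤ ((N + 1) * (c₁ / 2 ^ d)) * scale ℓ i ^ d := by gcongr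
      _ = _ := by rw [div_pow]; ring

end LipschitzSection

/-- If `S` is essential over a ball of radius comparable to `ℓ` and satisfies regularity bounds at
smaller scales, then `π` has a Lipschitz section over a large subset of a cube of side `ℓ`. -/
theorem exists_lipschitz_section (d : ℕ) {c₁ A₀ : ℝ} (hc₁ : 0 < c₁) (hA₀ : 0 < A₀) :
    ∃ M : ℝ, 0 < M ∧ ∀ {X : Type} [MetricSpace X] [MeasurableSpace X] [BorelSpace X]
      {π : X → Fin d → ℝ} {S : Set X} {ℓ : ℝ}, LipschitzWith 1 π → IsCompact S → 0 < ℓ →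
      μH[(d : ℝ)] S ≤ ENNReal.ofReal (A₀ * ℓ ^ d) →
      (∀ y ∈ S, π y ∈ closedBall (cubeCenter ℓ 0 0) (7 * ℓ) → ∀ t, 0 < t → t ≤ ℓ →
        ENNReal.ofReal (c₁ * t ^ d) ≤ μH[(d : ℝ)] (S ∩ ball y t)) →
      ¬ Inessential π S (cubeCenter ℓ 0 0) (6 * ℓ) →
      ∃ (G : Set (Fin d → ℝ)) (f : (Fin d → ℝ) → X),
        ENNReal.ofReal (ℓ ^ d / 2) ≤ volume G ∧
        (∀ p ∈ G, p ∈ closedBall (cubeCenter ℓ 0 0) ℓ ∧ f p ∈ S ∧ π (f p) = p) ∧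
        ∀ p ∈ G, ∀ q ∈ G, dist (f p) (f q) ≤ M * dist p q := by
  set l : ℝ := 4 * 56 ^ d * A₀ with hl
  have hlpos : 0 < l := by positivity
  obtain ⟨N, hN⟩ := exists_nat_ge (l / (c₁ / 2 ^ d))
  have hN' : l ≤ (N + 1) * (c₁ / 2 ^ d) := by
    rw [div_le_iff₀ (by positivity)] at hN
    have : 0 < c₁ / 2 ^ d := by positivity
    linarith
  set η : ℝ := min (1 / 4) (1 / (40 * (d + 1) * A₀)) with hη
  have hη0 : 0 < η := by positivity
  have hη4 : η ≤ 1 / 4 := min_le_left _ _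
  have hηA : 40 * (d + 1) * A₀ * η ≤ 1 := by
    have : η ≤ 1 / (40 * (d + 1) * A₀) := min_le_right _ _
    rw [le_div_iff₀ (by positivity)] at this
    linarith
  refine ⟨8 * (N + 1) / η, by positivity, ?_⟩
  intro X _ _ _ π S ℓ hπ hS hℓ hup hlow hess
  obtain ⟨Y, hY⟩ := exists_isClusterTree hπ.continuous hS.isClosed hℓ hess
  let Q : Set (Fin d → ℝ) := {p | cubeIndex ℓ 0 p = 0}
  let Lay : Set (Fin d → ℝ) := ⋃ i, ⋃ k ∈ ambiguousCubes π S ℓ Y i, boundaryLayer ℓ η (i + 1) k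
  let Dens : Set (Fin d → ℝ) := {p | ∃ i, ENNReal.ofReal l * ENNReal.ofReal (scale ℓ i) ^ d ≤
    μH[(d : ℝ)] (S ∩ π ⁻¹' closedBall p (7 * scale ℓ i))}
  have hQ : volume Q = ENNReal.ofReal (ℓ ^ d) := by
    rw [volume_cube hℓ, scale_zero, ENNReal.ofReal_pow hℓ.le]
  have hLay : volume Lay ≤ ENNReal.ofReal (ℓ ^ d / 4) :=
    calc volume Lay
        ≤ ∑' i, volume (⋃ k ∈ ambiguousCubes π S ℓ Y i, boundaryLayer ℓ η (i + 1) k) :=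
          measure_iUnion_le _
      _ ≤ ∑' i, (2 * d * ENNReal.ofReal η) *
            volume (cubeIndex ℓ (i + 1) ⁻¹' ambiguousCubes π S ℓ Y i) :=
          ENNReal.tsum_le_tsum fun i => volume_iUnion_boundaryLayer_le hℓ hη0.le _
      _ ≤ (2 * d * ENNReal.ofReal η) * (5 * ENNReal.ofReal (A₀ * ℓ ^ d)) := by
          rw [ENNReal.tsum_mul_left]
          gcongr
          exact (tsum_volume_ambiguousCubes_le hπ hS.isClosed hℓ hY).trans (by gcongr)
      _ = ENNReal.ofReal ((2 * d * η) * (5 * (A₀ * ℓ ^ d))) := by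
          rw [ENNReal.ofReal_mul (p := 2 * d * η) (by positivity),
            ENNReal.ofReal_mul (p := 2 * d) (by positivity),
            ENNReal.ofReal_mul (p := 2) (by positivity), ENNReal.ofReal_mul (p := 5) (by norm_num)]
          simp
      _ ≤ ENNReal.ofReal (ℓ ^ d / 4) := by
          refine ENNReal.ofReal_le_ofReal ?_
          have h1 : 0 < ℓ ^ d := by positivity
          have h2 : d * A₀ * η ≤ 1 / 40 := by
            have : 0 < A₀ * η := by positivity
            linarith
          nlinarith
  have hDens : volume Dens ≤ ENNReal.ofReal (ℓ ^ d / 4) := by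
    have h := volume_maximal_le (μ := μH[(d : ℝ)]) hπ.continuous.measurable (S := S)
      (l := ENNReal.ofReal l) (R := ℓ) (s := scale ℓ) (fun i => scale_pos hℓ) fun i => scale_le hℓ
    have h2 : ENNReal.ofReal l * volume Dens ≤ ENNReal.ofReal l * ENNReal.ofReal (ℓ ^ d / 4) := by
      refine h.trans ?_
      rw [← ENNReal.ofReal_mul hlpos.le]
      calc 56 ^ d * μH[(d : ℝ)] S ≤ 56 ^ d * ENNReal.ofReal (A₀ * ℓ ^ d) := by gcongr
        _ = ENNReal.ofReal (56 ^ d * (A₀ * ℓ ^ d)) := by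
          rw [ENNReal.ofReal_mul (p := 56 ^ d) (by positivity),
            ENNReal.ofReal_pow (p := 56) (by norm_num)]
          norm_num
        _ = _ := by congr 1; rw [hl]; ring
    exact (ENNReal.mul_le_mul_iff_right (ENNReal.ofReal_pos.2 hlpos).ne' ENNReal.ofReal_ne_top).1 h2
  have : Nonempty X := ⟨Y 0 0⟩
  choose! f hfπ hf using fun p (hp : p ∈ Q) =>
    exists_mem_treeClusters hπ.continuous hS hℓ hY (p := p) hp
  refine ⟨Q \ (Lay ∪ Dens), f, ?_, fun p hp => ⟨?_, ?_, hfπ p hp.1⟩, ?_⟩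
  · have h1 : volume Q ≤ volume (Q \ (Lay ∪ Dens)) + (volume Lay + volume Dens) :=
      (measure_mono (fun p hp => by
        by_cases h : p ∈ Lay ∪ Dens
        · exact Or.inr h
        · exact Or.inl ⟨hp, h⟩ : Q ⊆ (Q \ (Lay ∪ Dens)) ∪ (Lay ∪ Dens))).trans
        ((measure_union_le _ _).trans (by gcongr; exact measure_union_le _ _))
    have h2 : volume Lay + volume Dens ≤ ENNReal.ofReal (ℓ ^ d / 2) := by
      refine (add_le_add hLay hDens).trans ?_
      rw [← ENNReal.ofReal_add (by positivity) (by positivity)]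
      exact ENNReal.ofReal_le_ofReal (by linarith)
    have h3 : ENNReal.ofReal (ℓ ^ d / 2) + ENNReal.ofReal (ℓ ^ d / 2) ≤
        volume (Q \ (Lay ∪ Dens)) + ENNReal.ofReal (ℓ ^ d / 2) := by
      rw [← ENNReal.ofReal_add (by positivity) (by positivity), add_halves, ← hQ]
      exact h1.trans (by gcongr)
    exact (ENNReal.add_le_add_iff_right ENNReal.ofReal_ne_top).1 h3
  · have h1 := dist_cubeCenter_le (p := p) (i := 0) hℓ
    have h2 : cubeIndex ℓ 0 p = 0 := hp.1
    rw [h2, scale_zero] at h1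
    rw [mem_closedBall]; linarith
  · exact (treeCluster_subset_slab hY hp.1 (hf p hp.1 0)).1
  · intro p hp q hq
    rcases eq_or_ne p q with rfl | hne
    · simp
    have hδ : 0 < dist p q := dist_pos.2 hne
    have hdiam : ∀ w ∈ Q \ (Lay ∪ Dens), ∀ i, ∀ u ∈ treeCluster π S ℓ Y i w,
        ∀ v ∈ treeCluster π S ℓ Y i w, dist u v < 2 * scale ℓ i * N := by
      intro w hw i u hu v hv
      refine dist_lt_of_mem_treeCluster hπ hS.isClosed hℓ hY hw.1 hN' hlow ?_ hu hv
      by_contra h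
      exact hw.2 (Or.inr ⟨i, not_lt.1 h⟩)
    have hamb : ∀ w ∈ Q \ (Lay ∪ Dens), ∀ i, w ∈ boundaryLayer ℓ η (i + 1) (cubeIndex ℓ (i + 1) w) →
        ¬ IsAmbiguous π S ℓ Y i (cubeIndex ℓ (i + 1) w) := by
      intro w hw i hwl hwa
      exact hw.2 (Or.inl (mem_iUnion.2 ⟨i, mem_biUnion ⟨hwa, w, hw.1, rfl⟩ hwl⟩))
    have hex : ∃ m, η * scale ℓ m ≤ dist p q := by
      have := (tendsto_scale (ℓ := ℓ)).const_mul η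
      rw [mul_zero] at this
      obtain ⟨m, hm⟩ := (this.eventually (gt_mem_nhds hδ)).exists
      exact ⟨m, hm.le⟩
    have hconv : ∀ m, η * scale ℓ m ≤ dist p q →
        dist (f p) (f q) ≤ 8 * scale ℓ m * (N + 1) →
          dist (f p) (f q) ≤ 8 * (N + 1) / η * dist p q := by
      intro m hm h
      calc dist (f p) (f q) ≤ 8 * (N + 1) / η * (η * scale ℓ m) := by
            refine h.trans_eq ?_; field_simp
        _ ≤ _ := by gcongr
    classical
    have hspec := Nat.find_spec hex
    refine hconv _ hspec ?_
    rcases hm : Nat.find hex with _ | m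
    · have hs : 0 < scale ℓ 0 := scale_pos hℓ
      have hq0 : f q ∈ treeCluster π S ℓ Y 0 p := by
        have : cubeIndex ℓ 0 p = cubeIndex ℓ 0 q := Eq.trans hp.1 (Eq.symm hq.1)
        rw [treeCluster, this]; exact hf q hq.1 0
      have := hdiam p hp 0 _ (hf p hp.1 0) _ hq0
      nlinarith
    · have hlt : dist p q < η * scale ℓ m :=
        not_le.1 (Nat.find_min hex (by omega : m < Nat.find hex))
      have hs : 0 < scale ℓ m := scale_pos hℓ
      have hs1 : scale ℓ (m + 1) = scale ℓ m / 2 := scale_succ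
      obtain ⟨z, ⟨hzp, hzq⟩, -⟩ := exists_mem_treeCluster_inter hπ.continuous hS.isClosed hℓ hY
        hp.1 hq.1 (m := m) (by nlinarith) (fun i hi hidx => by
          have hsc : scale ℓ m ≤ scale ℓ (i + 1) :=
            div_le_div_of_nonneg_left hℓ.le (by positivity) (pow_le_pow_right₀ (by norm_num) hi)
          have hlt' : dist p q < η * scale ℓ (i + 1) := hlt.trans_le (by gcongr)
          exact ⟨hamb p hp i (mem_boundaryLayer hℓ hidx hlt'), hamb q hq i
            (mem_boundaryLayer hℓ hidx.symm (by rwa [dist_comm]))⟩)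
      have h1 := hdiam p hp m _ (hf p hp.1 m) _ hzp
      have h2 := hdiam q hq m _ hzq _ (hf q hq.1 m)
      have := dist_triangle (f p) z (f q)
      rw [hs1]
      nlinarith

/-! ### Flatness and approximation by continuous maps -/

/-- A continuous map close to a closed set all of whose small pieces are nearly convex can be
perturbed to a continuous map into the set. -/
lemma exists_continuous_map_into {T F : Type*} [TopologicalSpace T] [NormalSpace T]
    [ParacompactSpace T] [NormedAddCommGroup F] [NormedSpace ℝ F] [CompleteSpace F] {E : Set F}
    (hE : IsClosed E) {s₀ : ℝ}
    (hull : ∀ s, 0 < s → s ≤ s₀ → ∀ w, ∀ z ∈ convexHull ℝ (E ∩ ball w (2 * s)),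
      infDist z E < s / 2) (hs₀ : 0 < s₀) (hne : E.Nonempty)
    {f₀ : T → F} (hf₀ : Continuous f₀) (hf₀E : ∀ p, infDist (f₀ p) E < s₀) :
    ∃ f : T → F, Continuous f ∧ ∀ p, f p ∈ E ∧ dist (f₀ p) (f p) ≤ 4 * s₀ := by
  let s : ℕ → ℝ := fun k => s₀ / 2 ^ k
  have hs : ∀ k, 0 < s k := fun k => by positivity
  have hss : ∀ k, s (k + 1) = s k / 2 := fun k => by simp only [s, pow_succ]; field_simp
  have hs₀' : ∀ k, s k ≤ s₀ := fun k => div_le_self hs₀.le (one_le_pow₀ (by norm_num))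
  have step : ∀ k (f : {f : T → F // Continuous f ∧ ∀ p, infDist (f p) E < s k}),
      ∃ g : {f : T → F // Continuous f ∧ ∀ p, infDist (f p) E < s (k + 1)},
        ∀ p, dist (f.1 p) (g.1 p) ≤ 2 * s k := by
    rintro k ⟨f, hf, hfE⟩
    obtain ⟨g, hg⟩ := exists_continuous_forall_mem_convex_of_local_const
      (t := fun p => convexHull ℝ (E ∩ ball (f p) (2 * s k))) (fun p => convex_convexHull ℝ _)
      (fun p => by
        obtain ⟨e, he, hde⟩ := (infDist_lt_iff hne).1 (hfE p)
        refine ⟨e, ?_⟩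
        have : ∀ᶠ q in nhds p, dist e (f q) < 2 * s k :=
          (continuous_const.dist hf).continuousAt.eventually_lt continuousAt_const (by
            rw [dist_comm]; linarith [hs k])
        filter_upwards [this] with q hq
        exact subset_convexHull ℝ _ ⟨he, hq⟩)
    refine ⟨⟨g, g.continuous, fun p => ?_⟩, fun p => ?_⟩
    · rw [hss]; exact hull _ (hs k) (hs₀' k) _ _ (hg p)
    · have : g p ∈ ball (f p) (2 * s k) :=
        convexHull_min inter_subset_right (convex_ball _ _) (hg p)
      rw [dist_comm]; exact this.le
  choose next hnext using step
  let f : ∀ k, {f : T → F // Continuous f ∧ ∀ p, infDist (f p) E < s k} := fun k =>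
    Nat.rec ⟨f₀, hf₀, by simpa [s] using hf₀E⟩ (fun k g => next k g) k
  have hdist : ∀ p k, dist ((f k).1 p) ((f (k + 1)).1 p) ≤ 4 * s₀ / 2 / 2 ^ k := fun p k => by
    refine (hnext k (f k) p).trans_eq ?_
    simp only [s]; ring
  choose g hg using fun p => cauchySeq_tendsto_of_complete (cauchySeq_of_le_geometric_two (hdist p))
  have hgd : ∀ k p, dist ((f k).1 p) (g p) ≤ 4 * s₀ / 2 ^ k := fun k p =>
    dist_le_of_le_geometric_two_of_tendsto (hdist p) (hg p) k
  have hlim : ∀ c : ℝ, Filter.Tendsto (fun k : ℕ => c / 2 ^ k) Filter.atTop (nhds 0) := fun c => by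
    have := tendsto_scale (ℓ := c)
    exact this
  refine ⟨g, ?_, fun p => ⟨?_, (hgd 0 p).trans_eq (by simp)⟩⟩
  · have hu : TendstoUniformly (fun k p => (f k).1 p) g Filter.atTop := by
      rw [Metric.tendstoUniformly_iff]
      intro δ hδ
      filter_upwards [(hlim (4 * s₀)).eventually (gt_mem_nhds hδ)] with k hk p
      rw [dist_comm]
      exact (hgd k p).trans_lt hk
    exact hu.continuous (Filter.Eventually.of_forall fun k => (f k).2.1).frequently
  · rw [hE.mem_iff_infDist_zero hne]
    refine le_antisymm ?_ infDist_nonneg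
    have h1 : Filter.Tendsto (fun k => infDist ((f k).1 p) E) Filter.atTop
        (nhds (infDist (g p) E)) := ((continuous_infDist_pt E).tendsto _).comp (hg p)
    exact le_of_tendsto_of_tendsto' h1 (hlim s₀) fun k => ((f k).2.2 p).le

lemma mem_cthickening_iff_infDist_le_of_nonempty {X : Type*} [PseudoMetricSpace X] {x : X}
    {s : Set X} {δ : ℝ} (hδ : 0 ≤ δ) (hs : s.Nonempty) :
    x ∈ cthickening δ s ↔ infDist x s ≤ δ := by
  rw [mem_cthickening_iff, infDist, ENNReal.le_ofReal_iff_toReal_le (infEDist_ne_top hs) hδ]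

section Flat

variable {n : ℕ} {E : Set (EuclideanSpace ℝ (Fin n))} {ε : ℝ}

/-- `E` is `ε`-close to the affine subspace `Q` at `x`, at scale `r`. -/
structure IsFlatAt (E : Set (EuclideanSpace ℝ (Fin n))) (ε : ℝ) (x : EuclideanSpace ℝ (Fin n))
    (r : ℝ) (Q : AffineSubspace ℝ (EuclideanSpace ℝ (Fin n))) : Prop where
  mem : x ∈ Q
  infDist_set : ∀ y ∈ Q, dist y x < r → infDist y E ≤ ε * r
  infDist_plane : ∀ y ∈ E, dist y x < r → infDist y (Q : Set (EuclideanSpace ℝ (Fin n))) ≤ ε * r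

lemma exists_dist_le_of_infDist_le {Q : AffineSubspace ℝ (EuclideanSpace ℝ (Fin n))}
    {x y : EuclideanSpace ℝ (Fin n)} {δ : ℝ} (hx : x ∈ Q)
    (h : infDist y (Q : Set (EuclideanSpace ℝ (Fin n))) ≤ δ) : ∃ z ∈ Q, dist y z ≤ δ := by
  have : IsClosed (Q : Set (EuclideanSpace ℝ (Fin n))) := Q.closed_of_finiteDimensional
  obtain ⟨z, hz, hyz⟩ := this.exists_infDist_eq_dist ⟨x, hx⟩ y
  exact ⟨z, hz, hyz ▸ h⟩

lemma infDist_lt_of_mem_convexHull (hε : 0 < ε) (hε' : ε < 1 / 40)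
    (hflat : ∀ x ∈ E, ∀ r, 0 < r → r ≤ 1 → ∃ Q, IsFlatAt E ε x r Q) {s : ℝ} (hs : 0 < s)
    (hs' : 10 * s ≤ 1) {w z : EuclideanSpace ℝ (Fin n)}
    (hz : z ∈ convexHull ℝ (E ∩ ball w (2 * s))) : infDist z E < s / 2 := by
  obtain ⟨e, he⟩ : (E ∩ ball w (2 * s)).Nonempty := convexHull_nonempty_iff.1 ⟨z, hz⟩
  obtain ⟨Q, hQ⟩ := hflat e he.1 (10 * s) (by positivity) hs'
  have hsub : E ∩ ball w (2 * s) ⊆ cthickening (ε * (10 * s)) (Q : Set _) ∩ ball e (4 * s) := by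
    intro y hy
    have hye : dist y e < 4 * s := by
      have h1 : dist y w < 2 * s := hy.2
      have h2 : dist e w < 2 * s := he.2
      linarith [dist_triangle_right y e w]
    refine ⟨?_, hye⟩
    rw [mem_cthickening_iff_infDist_le_of_nonempty (by positivity) ⟨e, hQ.mem⟩]
    exact hQ.infDist_plane y hy.1 (by linarith)
  obtain ⟨hz1, hz2⟩ := convexHull_min hsub ((Q.convex.cthickening _).inter (convex_ball _ _)) hz
  rw [mem_cthickening_iff_infDist_le_of_nonempty (by positivity) ⟨e, hQ.mem⟩] at hz1
  obtain ⟨z', hz', hzz⟩ := exists_dist_le_of_infDist_le hQ.mem hz1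
  have hz2' : dist z e < 4 * s := hz2
  have h1 := hQ.infDist_set z' hz' (by nlinarith [dist_triangle_left z' e z])
  nlinarith [infDist_le_infDist_add_dist (s := E) (x := z) (y := z')]

end Flat

lemma nhd_comm {n : ℕ} (x : V n) (r : ℝ) (A B : Set (V n)) : nhd x r A B = nhd x r B A := by
  rw [nhd, nhd, max_comm]

lemma infDist_le_of_nhd_le {n : ℕ} {x y : V n} {r ε : ℝ} {A B : Set (V n)} (hr : 0 < r)
    (hx : x ∈ B) (h : nhd x r A B ≤ ε) (hy : y ∈ A) (hyx : dist y x < r) :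
    infDist y B ≤ ε * r := by
  rw [nhd, inv_mul_le_iff₀ hr, mul_comm r] at h
  refine le_trans ?_ ((le_max_left _ _).trans h)
  have hle : ∀ z ∈ A ∩ ball x r, infDist z B ≤ r := fun z hz =>
    (infDist_le_dist_of_mem hx).trans (le_of_lt hz.2)
  have hbdd : BddAbove (range fun z => ⨆ _ : z ∈ A ∩ ball x r, infDist z B) :=
    ⟨r, by
      rintro _ ⟨z, rfl⟩
      exact Real.iSup_le (hle z) hr.le⟩
  refine le_trans (le_of_eq ?_) (le_ciSup hbdd y)
  have hmem : y ∈ A ∩ ball x r := ⟨hy, hyx⟩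
  simp only [ciSup_pos hmem]

lemma IsLARRF.exists_isFlatAt {n d : ℕ} {ε C₀ : ℝ} {E : Set (V n)} (hE : IsLARRF n d ε C₀ E)
    {x : V n} (hx : x ∈ E) {r : ℝ} (hr : 0 < r) (hr' : r ≤ 1) :
    ∃ Q, Module.finrank ℝ Q.direction = d ∧ IsFlatAt E ε x r Q := by
  obtain ⟨_, ⟨Q, rfl, hQd, -⟩, hxQ, hQ⟩ := (hE.2.2 x hx r hr hr').1
  exact ⟨Q, hQd, hxQ, fun y hy hyx => infDist_le_of_nhd_le hr hx hQ hy hyx,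
    fun y hy hyx => infDist_le_of_nhd_le hr hxQ (nhd_comm x r E Q ▸ hQ) hy hyx⟩

lemma EuclideanSpace.norm_le_card_mul_norm_ofLp {d : ℕ} (v : EuclideanSpace ℝ (Fin d)) :
    ‖v‖ ≤ d * ‖v.ofLp‖ := by
  rw [EuclideanSpace.norm_eq]
  refine Real.sqrt_le_iff.2 ⟨by positivity, ?_⟩
  calc ∑ i, ‖v i‖ ^ 2 ≤ ∑ _i : Fin d, ‖v.ofLp‖ ^ 2 :=
        Finset.sum_le_sum fun i _ => by gcongr; exact norm_le_pi_norm v.ofLp i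
    _ = d * ‖v.ofLp‖ ^ 2 := by simp
    _ ≤ (d * ‖v.ofLp‖) ^ 2 := by
      rw [mul_pow]
      gcongr
      exact_mod_cast Nat.le_self_pow two_ne_zero d

lemma EuclideanSpace.norm_ofLp_le {d : ℕ} (v : EuclideanSpace ℝ (Fin d)) : ‖v.ofLp‖ ≤ ‖v‖ :=
  (pi_norm_le_iff_of_nonneg (norm_nonneg v)).2 fun i => PiLp.norm_apply_le v i

/-- A subspace of dimension `d` has orthonormal coordinates. -/
lemma Submodule.exists_linearIsometry_orthonormal_coordinates {n d : ℕ} {D : Submodule ℝ (V n)}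
    (hD : Module.finrank ℝ D = d) :
    ∃ (ι : EuclideanSpace ℝ (Fin d) →ₗᵢ[ℝ] V n) (φ : V n →L[ℝ] EuclideanSpace ℝ (Fin d)),
      (∀ p, ι p ∈ D) ∧ (∀ p, φ (ι p) = p) ∧ (∀ y, ι (φ y) = D.starProjection y) := by
  let b := (stdOrthonormalBasis ℝ D).reindex (finCongr hD)
  refine ⟨D.subtypeₗᵢ.comp b.repr.symm.toLinearIsometry,
    (b.repr.toContinuousLinearEquiv : D →L[ℝ] _).comp D.orthogonalProjectionOnto,
    fun p => by simp, fun p => by simp, fun y => by simp⟩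

/-! ### Coordinates along an approximating plane -/

section PlaneCoordinates

variable {n d : ℕ} {E : Set (V n)} {ε r : ℝ} {x : V n} {Q : AffineSubspace ℝ (V n)}
  {ι : EuclideanSpace ℝ (Fin d) →ₗᵢ[ℝ] V n} {φ : V n →L[ℝ] EuclideanSpace ℝ (Fin d)}

lemma norm_coordinates_le (hιφ : ∀ y, ι (φ y) = Q.direction.starProjection y) (y : V n) :
    ‖φ y‖ ≤ ‖y‖ := by
  rw [← ι.norm_map, hιφ]
  exact Q.direction.norm_starProjection_apply_le y

lemma lipschitzWith_coordinates (hιφ : ∀ y, ι (φ y) = Q.direction.starProjection y) :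
    LipschitzWith 1 fun y => (φ (y - x)).ofLp := by
  refine LipschitzWith.of_dist_le_mul fun y z => ?_
  rw [NNReal.coe_one, one_mul, dist_eq_norm, dist_eq_norm]
  have h : (φ (y - x)).ofLp - (φ (z - x)).ofLp = (φ (y - z)).ofLp := by
    rw [← WithLp.ofLp_sub, ← map_sub, sub_sub_sub_cancel_right]
  rw [h]
  exact (EuclideanSpace.norm_ofLp_le _).trans (norm_coordinates_le hιφ _)

lemma dist_cubeCenter_zero_le {ℓ : ℝ} (hℓ : 0 < ℓ) :
    dist (0 : Fin d → ℝ) (cubeCenter ℓ 0 0) ≤ ℓ / 2 := by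
  refine (dist_pi_le_iff (by positivity)).2 fun j => ?_
  rw [cubeCenter, scale_zero, Real.dist_eq, abs_le]
  simp only [Pi.zero_apply, Int.cast_zero]
  constructor <;> linarith

/-- The nearest-point retraction of a normed space onto a ball around the origin. -/
def radialRetraction {F : Type*} [NormedAddCommGroup F] [NormedSpace ℝ F] (ρ : ℝ) (p : F) : F :=
  (ρ / max ‖p‖ ρ) • p

lemma continuous_radialRetraction {F : Type*} [NormedAddCommGroup F] [NormedSpace ℝ F] {ρ : ℝ}
    (hρ : 0 < ρ) : Continuous (radialRetraction ρ : F → F) :=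
  (continuous_const.div (continuous_norm.max continuous_const)
    fun _ => (lt_max_of_lt_right hρ).ne').smul continuous_id

lemma norm_radialRetraction_le {F : Type*} [NormedAddCommGroup F] [NormedSpace ℝ F] {ρ : ℝ}
    (hρ : 0 < ρ) (p : F) : ‖radialRetraction ρ p‖ ≤ ρ := by
  have h : 0 < max ‖p‖ ρ := lt_max_of_lt_right hρ
  rw [radialRetraction, norm_smul, Real.norm_of_nonneg (by positivity), div_mul_eq_mul_div,
    div_le_iff₀ h]
  gcongr
  exact le_max_left _ _

lemma radialRetraction_of_norm_le {F : Type*} [NormedAddCommGroup F] [NormedSpace ℝ F] {ρ : ℝ}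
    (hρ : 0 < ρ) {p : F} (hp : ‖p‖ ≤ ρ) : radialRetraction ρ p = p := by
  rw [radialRetraction, max_eq_right hp, div_self hρ.ne', one_smul]

/-- A set which is flat at all scales contains a continuous approximate copy of a piece of the
approximating plane. -/
lemma exists_continuous_approximate_plane (hE : IsClosed E) (hx : x ∈ E) (hε : 0 < ε)
    (hε' : ε ≤ 1 / 256) (hr : 0 < r) (hr' : r ≤ 1)
    (hflat : ∀ y ∈ E, ∀ t, 0 < t → t ≤ 1 → ∃ Q, IsFlatAt E ε y t Q) (hQ : IsFlatAt E ε x r Q)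
    (hι : ∀ p, ι p ∈ Q.direction) :
    ∃ f : EuclideanSpace ℝ (Fin d) → V n, Continuous f ∧ (∀ p, f p ∈ E ∩ closedBall x (r / 2)) ∧
      ∀ p, ‖p‖ ≤ r / 4 → dist (x + ι p) (f p) ≤ 8 * (ε * r) := by
  have hr4 : 0 < r / 4 := by positivity
  have hεr : ε * r ≤ 1 / 256 * r := by gcongr
  have hεr0 : 0 < ε * r := by positivity
  have hdist : ∀ p, dist (x + ι (radialRetraction (r / 4) p)) x ≤ r / 4 := fun p => by
    rw [dist_self_add_left, ι.norm_map]
    exact norm_radialRetraction_le hr4 p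
  obtain ⟨f, hf, hfE⟩ := exists_continuous_map_into hE (s₀ := 2 * (ε * r))
    (fun s hs hs' w z hz => infDist_lt_of_mem_convexHull hε (by linarith) hflat hs
      (by linarith) hz) (by positivity) ⟨x, hx⟩
    (f₀ := fun p => x + ι (radialRetraction (r / 4) p))
    (continuous_const.add (ι.continuous.comp (continuous_radialRetraction hr4)))
    (fun p => by
      have hmem : x + ι (radialRetraction (r / 4) p) ∈ Q := by
        rw [add_comm]
        exact AffineSubspace.vadd_mem_of_mem_direction (hι _) hQ.mem
      linarith [hQ.infDist_set _ hmem (by linarith [hdist p])])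
  refine ⟨f, hf, fun p => ⟨(hfE p).1, ?_⟩, fun p hp => ?_⟩
  · have h1 := (hfE p).2
    rw [mem_closedBall]
    linarith [hdist p, dist_triangle_left (f p) x (x + ι (radialRetraction (r / 4) p))]
  · have h1 := (hfE p).2
    rw [radialRetraction_of_norm_le hr4 hp] at h1
    linarith

lemma not_inessential_coordinates (hd : 0 < d) (hE : IsClosed E) (hx : x ∈ E) (hε : 0 < ε)
    {ℓ : ℝ} (hℓ : 0 < ℓ) (hℓr : ℓ * (256 * d) = r) (hεℓ : ε * r ≤ ℓ) (hr' : r ≤ 1)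
    (hflat : ∀ y ∈ E, ∀ t, 0 < t → t ≤ 1 → ∃ Q, IsFlatAt E ε y t Q) (hQ : IsFlatAt E ε x r Q)
    (hι : ∀ p, ι p ∈ Q.direction) (hφι : ∀ p, φ (ι p) = p)
    (hιφ : ∀ y, ι (φ y) = Q.direction.starProjection y) :
    ¬ Inessential (fun y => (φ (y - x)).ofLp) (E ∩ closedBall x (r / 2)) (cubeCenter ℓ 0 0)
      (6 * ℓ) := by
  have hd1 : (1 : ℝ) ≤ d := by exact_mod_cast hd
  have hr : 0 < r := by rw [← hℓr]; positivity
  have hε' : ε ≤ 1 / 256 := by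
    have h1 : ε * (256 * d) ≤ 1 := by
      refine le_of_mul_le_mul_left ?_ hℓ
      calc ℓ * (ε * (256 * d)) = ε * (ℓ * (256 * d)) := by ring
        _ ≤ ℓ * 1 := by rw [hℓr, mul_one]; exact hεℓ
    nlinarith
  rintro ⟨g, hgc, hgavoid, hgeq⟩
  obtain ⟨f, hf, hfS, hfp⟩ := exists_continuous_approximate_plane hE hx hε hε' hr hr' hflat hQ hι
  have hc := dist_cubeCenter_zero_le (d := d) hℓ
  have : Nonempty (Fin d) := ⟨⟨0, hd⟩⟩
  let χ : EuclideanSpace ℝ (Fin d) → ℝ := fun p => max 0 (min 1 (2 - 16 * ‖p‖ / r))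
  have hχ : Continuous χ := by fun_prop
  have hχ01 : ∀ p, 0 ≤ χ p ∧ χ p ≤ 1 := fun p =>
    ⟨le_max_left _ _, max_le zero_le_one (min_le_left _ _)⟩
  have hgf : Continuous fun p => g (f p) := hgc.comp_continuous hf hfS
  let H : EuclideanSpace ℝ (Fin d) → EuclideanSpace ℝ (Fin d) := fun p =>
    p + χ p • (WithLp.toLp 2 (g (f p)) - p)
  have hH : Continuous H := continuous_id.add
    (hχ.smul (((PiLp.continuous_toLp 2 _).comp hgf).sub continuous_id))
  have hχ0 : ∀ p, r / 8 ≤ ‖p‖ → χ p = 0 := fun p hp => by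
    have h1 : 2 ≤ 16 * ‖p‖ / r := by rw [le_div_iff₀ hr]; linarith
    exact max_eq_left ((min_le_right _ _).trans (by linarith))
  obtain ⟨p, hp⟩ := hH.exists_eq_zero_of_eq_id_off_ball (R := r / 8) (by positivity)
    fun p hp => by simp [H, hχ0 p hp]
  rcases le_or_gt ‖p‖ (r / 16) with hp1 | hp1
  · have hχ1 : χ p = 1 := by
      have h1 : 16 * ‖p‖ / r ≤ 1 := by rw [div_le_iff₀ hr]; linarith
      have h2 : min 1 (2 - 16 * ‖p‖ / r) = 1 := min_eq_left (by linarith)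
      simp [χ, h2]
    have h0 : g (f p) = 0 := by simpa [H, hχ1] using hp
    exact hgavoid _ (hfS p) (by rw [h0, mem_ball]; linarith)
  · have hp8 : ‖p‖ < r / 8 := by
      by_contra! h
      have h0 : p = 0 := by simpa [H, hχ0 p h] using hp
      rw [h0, norm_zero] at hp1
      linarith
    have hpinf : 16 * ℓ ≤ ‖p.ofLp‖ := by
      have h1 := EuclideanSpace.norm_le_card_mul_norm_ofLp p
      have h2 : d * (16 * ℓ) ≤ d * ‖p.ofLp‖ := by linarith
      exact le_of_mul_le_mul_left h2 (by linarith)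
    have hclose : ‖(φ (f p - x)).ofLp - p.ofLp‖ ≤ 8 * ℓ := by
      have h1 : (φ (f p - x)).ofLp - p.ofLp = (φ (f p - (x + ι p))).ofLp := by
        rw [← WithLp.ofLp_sub, ← sub_sub, map_sub φ (f p - x), hφι]
      rw [h1]
      refine (EuclideanSpace.norm_ofLp_le _).trans ((norm_coordinates_le hιφ _).trans ?_)
      rw [← dist_eq_norm, dist_comm]
      linarith [hfp p (by linarith)]
    have hout : (φ (f p - x)).ofLp ∉ ball (cubeCenter ℓ 0 0) (6 * ℓ) := fun hmem => by
      rw [mem_ball] at hmem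
      have h1 := dist_triangle4 p.ofLp (φ (f p - x)).ofLp (cubeCenter ℓ 0 0) 0
      rw [dist_zero_right, dist_comm p.ofLp, dist_eq_norm (φ (f p - x)).ofLp,
        dist_comm _ (0 : Fin d → ℝ)] at h1
      linarith
    have h1 : p.ofLp + χ p • ((φ (f p - x)).ofLp - p.ofLp) = 0 := by
      have h2 : g (f p) = (φ (f p - x)).ofLp := hgeq _ (hfS p) hout
      rw [← h2]
      simpa [H] using congrArg WithLp.ofLp hp
    have h2 : ‖p.ofLp‖ ≤ 8 * ℓ := by
      rw [eq_neg_of_add_eq_zero_left h1, norm_neg, norm_smul, Real.norm_of_nonneg (hχ01 p).1]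
      exact (mul_le_of_le_one_left (norm_nonneg _) (hχ01 p).2).trans hclose
    linarith

/-- Points of a flat set with small plane coordinates are close to the centre. -/
lemma dist_le_of_coordinates_mem (hd : 0 < d) {ℓ : ℝ} (hℓ : 0 < ℓ) (hℓr : ℓ * (256 * d) = r)
    (hεℓ : ε * r ≤ ℓ) (hQ : IsFlatAt E ε x r Q)
    (hιφ : ∀ y, ι (φ y) = Q.direction.starProjection y) {y : V n} (hy : y ∈ E)
    (hyx : dist y x < r)
    (hφy : (φ (y - x)).ofLp ∈ closedBall (cubeCenter ℓ 0 0) (7 * ℓ)) :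
    dist y x ≤ r / 4 := by
  have hd1 : (1 : ℝ) ≤ d := by exact_mod_cast hd
  obtain ⟨z, hz, hyz⟩ := exists_dist_le_of_infDist_le hQ.mem (hQ.infDist_plane y hy hyx)
  have hzx : z - x ∈ Q.direction := Q.vsub_mem_direction hz hQ.mem
  have h1 : ‖z - x‖ = ‖φ (z - x)‖ := by
    rw [← ι.norm_map, hιφ, Submodule.starProjection_eq_self_iff.2 hzx]
  have h2 : ‖(φ (z - x)).ofLp‖ ≤ 9 * ℓ := by
    have h3 := (lipschitzWith_coordinates (x := x) hιφ).dist_le_mul z y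
    rw [NNReal.coe_one, one_mul, dist_comm z] at h3
    rw [mem_closedBall] at hφy
    have h4 := dist_triangle4 (φ (z - x)).ofLp (φ (y - x)).ofLp (cubeCenter ℓ 0 0) 0
    rw [dist_zero_right, dist_comm _ (0 : Fin d → ℝ)] at h4
    linarith [dist_cubeCenter_zero_le (d := d) hℓ]
  have h5 := EuclideanSpace.norm_le_card_mul_norm_ofLp (φ (z - x))
  have h6 : d * ‖(φ (z - x)).ofLp‖ ≤ d * (9 * ℓ) := by gcongr
  have h7 := dist_triangle y z x
  rw [dist_eq_norm z, h1] at h7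
  nlinarith

end PlaneCoordinates

/-- A Lipschitz section, over a subset of a `d`-plane, of the coordinates on this plane lies on a
Lipschitz graph over the plane. -/
lemma exists_lipschitz_graph_of_section {n d : ℕ} {D : Submodule ℝ (V n)} {x : V n}
    {ι : EuclideanSpace ℝ (Fin d) →ₗᵢ[ℝ] V n} {φ : V n →L[ℝ] EuclideanSpace ℝ (Fin d)}
    (hφι : ∀ p, φ (ι p) = p) (hιφ : ∀ y, ι (φ y) = D.starProjection y)
    {G : Set (Fin d → ℝ)} {f : (Fin d → ℝ) → V n} {M : ℝ} (hM : 0 ≤ M)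
    (hf : ∀ p ∈ G, (φ (f p - x)).ofLp = p)
    (hfM : ∀ p ∈ G, ∀ q ∈ G, dist (f p) (f q) ≤ M * dist p q) :
    ∃ F : D → Dᗮ, (∀ v w, ‖F v - F w‖ ≤ n * M * ‖v - w‖) ∧
      ∀ p ∈ G, ∃ v : D, f p = x + (v : V n) + (F v : V n) := by
  have hLip : LipschitzOnWith M.toNNReal (fun p => (f p).ofLp) G :=
    LipschitzOnWith.of_dist_le_mul fun p hp q hq => by
      rw [Real.coe_toNNReal M hM, dist_eq_norm, ← WithLp.ofLp_sub]
      refine (EuclideanSpace.norm_ofLp_le _).trans ?_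
      rw [← dist_eq_norm]
      exact hfM p hp q hq
  obtain ⟨k, hk, hkf⟩ := hLip.extend_pi
  refine ⟨fun v => Dᗮ.orthogonalProjectionOnto (WithLp.toLp 2 (k (φ v).ofLp) - x),
    fun v w => ?_, fun p hp => ?_⟩
  · rw [← map_sub, sub_sub_sub_cancel_right]
    refine (Dᗮ.norm_orthogonalProjectionOnto_apply_le _).trans ?_
    refine (EuclideanSpace.norm_le_card_mul_norm_ofLp _).trans ?_
    rw [mul_assoc]
    gcongr
    have h1 := hk.dist_le_mul (φ v).ofLp (φ w).ofLp
    rw [Real.coe_toNNReal M hM, dist_eq_norm, dist_eq_norm,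
      ← WithLp.ofLp_sub 2 (φ v), ← map_sub] at h1
    refine h1.trans ?_
    gcongr
    refine (EuclideanSpace.norm_ofLp_le _).trans ?_
    rw [← ι.norm_map, hιφ]
    exact D.norm_starProjection_apply_le _
  · refine ⟨D.orthogonalProjectionOnto (f p - x), ?_⟩
    have h1 : φ (D.orthogonalProjectionOnto (f p - x) : V n) = φ (f p - x) := by
      rw [← Submodule.starProjection_apply, ← hιφ, hφι]
    have h2 : WithLp.toLp 2 (k p) = f p := by rw [← hkf hp]
    simp only [h1, hf p hp, h2]
    rw [← Submodule.starProjection_apply, ← Submodule.starProjection_apply, add_assoc,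
      D.starProjection_add_starProjection_orthogonal, add_sub_cancel]

/-- **Theorem 15.4**: a LARRF set contains big pieces of Lipschitz graphs:
for `x ∈ E` and `0 < r ≤ 1` there is a `d`-plane (written `p₀ + D`) and an
`M`-Lipschitz map `F : D → Dᗮ` whose graph meets `E ∩ B(x,r)` in a set of
`H^d`-measure at least `θ r^d`, with `θ`, `M` depending only on `n`, `d`, `C₀`. -/
theorem thm_15_4 (n d : ℕ) (hd : 0 < d) (hdn : d < n) :
    ∃ ε₀ : ℝ, 0 < ε₀ ∧
    ∀ C₀ : ℝ, 1 ≤ C₀ →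
    ∃ θ M : ℝ, 0 < θ ∧ 0 < M ∧
    ∀ ε : ℝ, 0 < ε → ε ≤ ε₀ →
    ∀ E : Set (V n), IsLARRF n d ε C₀ E →
    ∀ x ∈ E, ∀ r : ℝ, 0 < r → r ≤ 1 →
    ∃ (p₀ : V n) (D : Submodule ℝ (V n)) (F : D → Dᗮ),
      Module.finrank ℝ D = d ∧
      (∀ v w : D, ‖F v - F w‖ ≤ M * ‖v - w‖) ∧
      ENNReal.ofReal (θ * r ^ d) ≤
        μH[(d : ℝ)]
          (E ∩ {y : V n | ∃ v : D, y = p₀ + (v : V n) + (F v : V n)} ∩ ball x r) := by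
  have hd1 : (1 : ℝ) ≤ d := by exact_mod_cast hd
  have hn0 : (0 : ℝ) < n := by exact_mod_cast hd.trans hdn
  have hN : (0 : ℝ) < 256 * d := by positivity
  refine ⟨1 / (256 * d), by positivity, fun C₀ hC₀ => ?_⟩
  have hC₀' : 0 < C₀ := by linarith
  obtain ⟨M, hM, hcore⟩ := exists_lipschitz_section d (c₁ := C₀⁻¹) (A₀ := C₀ * (256 * d) ^ d)
    (by positivity) (by positivity)
  refine ⟨1 / (256 * d) ^ d / 2, n * M, by positivity, by positivity,
    fun ε hε hεε₀ E hE x hx r hr hr' => ?_⟩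
  obtain ⟨Q, hQd, hQ⟩ := hE.exists_isFlatAt hx hr hr'
  obtain ⟨ι, φ, hι, hφι, hιφ⟩ := Submodule.exists_linearIsometry_orthonormal_coordinates hQd
  obtain ⟨ℓ, hℓ⟩ : ∃ ℓ, ℓ = r / (256 * d) := ⟨_, rfl⟩
  have hℓ0 : 0 < ℓ := by rw [hℓ]; positivity
  have hℓr : ℓ * (256 * d) = r := by rw [hℓ]; field_simp
  have hεℓ : ε * r ≤ ℓ := by
    rw [hℓ, div_eq_mul_one_div, mul_comm]
    gcongr
  have hℓle : ℓ ≤ r / 256 := by nlinarith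
  have hπ := lipschitzWith_coordinates (x := x) hιφ
  have hsub : E ∩ closedBall x (r / 2) ⊆ E ∩ ball x r :=
    inter_subset_inter_right _ (closedBall_subset_ball (by linarith))
  obtain ⟨G, f, hG, hGf, hfM⟩ := hcore hπ (S := E ∩ closedBall x (r / 2)) (ℓ := ℓ)
    ((isCompact_closedBall x (r / 2)).inter_left hE.2.1) hℓ0
    (by
      refine (measure_mono hsub).trans ((hE.2.2 x hx r hr hr').2.2.trans_eq ?_)
      rw [mul_assoc, ← mul_pow, mul_comm (256 * (d : ℝ)), hℓr])
    (fun y hy hφy t ht htℓ => by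
      refine (hE.2.2 y hy.1 t ht (by linarith)).2.1.trans (measure_mono ?_)
      rintro z ⟨hzE, hz⟩
      refine ⟨⟨hzE, ?_⟩, hz⟩
      have h1 := dist_le_of_coordinates_mem hd hℓ0 hℓr hεℓ hQ hιφ hy.1 (hsub hy).2 hφy
      rw [mem_ball] at hz
      rw [mem_closedBall]
      linarith [dist_triangle z y x])
    (not_inessential_coordinates hd hE.2.1 hx hε hℓ0 hℓr hεℓ hr'
      (fun y hy t ht ht' => (hE.exists_isFlatAt hy ht ht').imp fun _ h => h.2) hQ hι hφι hιφ)
  obtain ⟨F, hF, hFG⟩ := exists_lipschitz_graph_of_section hφι hιφ hM.le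
    (fun p hp => (hGf p hp).2.2) hfM
  refine ⟨x, Q.direction, F, hQd, hF, ?_⟩
  have hGsub : G ⊆ (fun y => (φ (y - x)).ofLp) '' (f '' G) := fun p hp =>
    ⟨f p, mem_image_of_mem f hp, (hGf p hp).2.2⟩
  calc ENNReal.ofReal (1 / (256 * d) ^ d / 2 * r ^ d) = ENNReal.ofReal (ℓ ^ d / 2) := by
        rw [hℓ, div_pow]; ring_nf
    _ ≤ volume G := hG
    _ ≤ μH[(d : ℝ)] ((fun y => (φ (y - x)).ofLp) '' (f '' G)) := by
      refine (measure_mono hGsub).trans_eq ?_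
      rw [← hausdorffMeasure_pi_real, Fintype.card_fin]
    _ ≤ μH[(d : ℝ)] (f '' G) := by
      simpa using hπ.hausdorffMeasure_image_le (Nat.cast_nonneg d) (f '' G)
    _ ≤ _ := measure_mono (by
      rintro _ ⟨p, hp, rfl⟩
      have h1 := hsub (hGf p hp).2.1
      exact ⟨⟨h1.1, hFG p hp⟩, h1.2⟩)
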